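/- arXiv:0710.5818 — 3 statements merged into one kernel-verified Lean document; each statement's English description precedes it below -/
import Mathlib

section
/- Let Q be a Noetherian local ring, f a nonzerodivisor on Q, R = Q/(f), and M, N finitely generated R-modules. Then there is a long exact sequence ... → Tor_n^R(M,N) → Tor_{n+1}^Q(M,N) → Tor_{n+1}^R(M,N) → Tor_{n-1}^R(M,N) → Tor_n^Q(M,N) → Tor_n^R(M,N) → ... → Tor_0^R(M,N) → Tor_1^Q(M,N) → Tor_1^R(M,N) → 0. -/
open CategoryTheory

/-- The `i`-th Tor group of two modules over a commutative ring, as a type. -/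
noncomputable abbrev TorGrp (A : Type) [CommRing A] (i : ℕ)
    (M N : Type) [AddCommGroup M] [Module A M] [AddCommGroup N] [Module A N] : Type :=
  ((Tor (ModuleCat.{0} A) i).obj (ModuleCat.of A M)).obj (ModuleCat.of A N)

/-! Cover `M` by a free `Q`-module `F` with kernel `K`. As `f` is regular on `F` and zero on `M`,
the snake lemma for multiplication by `f` on `0 → K → F → M → 0` gives an exact sequence of
`R`-modules `0 → M → R ⊗ K → R ⊗ F → M → 0`. As `f` is regular on `K` too, `Tor_n^R(R ⊗ K, N)` is
`Tor_n^Q(K, N)`, which contains `Tor_{n+1}^Q(M, N)` as the kernel of the map to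
`Tor_n^R(R ⊗ F, N)`, with equality for `n > 0`. Let `S` be the image of `R ⊗ K` in `R ⊗ F`. In the
same way `Tor_n^R(S, N)` contains `Tor_{n+1}^R(M, N)`, and the long exact sequence of
`0 → M → R ⊗ K → S → 0` restricts to the one sought. -/

open MonoidalCategory TensorProduct

universe u

section ExactSequences

lemma injective_of_exact_of_subsingleton {A B C H : Type*} [AddGroup B] [AddGroup C] [Zero A]
    [Subsingleton A] [FunLike H B C] [AddMonoidHomClass H B C] {g : A → B} {h : H}
    (hgh : Function.Exact g h) (hg : g 0 = 0) : Function.Injective h := by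
  refine (injective_iff_map_eq_zero h).2 fun b hb => ?_
  obtain ⟨a, rfl⟩ := (hgh b).1 hb
  rw [Subsingleton.elim a 0, hg]

lemma nonempty_addEquiv_of_exact {A B C A' B' C' : Type*} [AddGroup A] [AddGroup B] [Zero C]
    [AddGroup A'] [AddGroup B'] [Zero C'] {d : A →+ B} {g : B → C} {d' : A' →+ B'} {g' : B' → C'}
    (hd : Function.Injective d) (hdg : Function.Exact d g) (hd' : Function.Injective d')
    (hdg' : Function.Exact d' g') (e : B ≃+ B') (h : ∀ x, g x = 0 ↔ g' (e x) = 0) :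
    Nonempty (A ≃+ A') := by
  have hrange : ((e : B →+ B').comp d).range = d'.range := by
    ext y
    obtain ⟨x, rfl⟩ := e.surjective y
    have hx : (∃ a, d a = x) ↔ ∃ a, d' a = e x := (hdg x).symm.trans ((h x).trans (hdg' _))
    simpa [AddMonoidHom.mem_range] using hx
  exact ⟨(AddMonoidHom.ofInjective (e.injective.comp hd)).trans
    ((AddEquiv.addSubgroupCongr hrange).trans (AddMonoidHom.ofInjective hd').symm)⟩

lemma exists_addMonoidHom_lift {A V B D : Type*} [AddGroup A] [AddGroup V] [AddGroup B]
    [Zero D] {τ : V →+ B} {φ : B → D} (hτ : Function.Injective τ) (hτφ : Function.Exact τ φ)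
    (α : A →+ B) (hα : ∀ x, φ (α x) = 0) : ∃ a : A →+ V, τ ∘ a = α := by
  let a := (AddMonoidHom.ofInjective hτ).symm.toAddMonoidHom.comp
    (α.codRestrict τ.range fun x => (hτφ _).1 (hα x))
  exact ⟨a, funext fun x => congr_arg Subtype.val ((AddMonoidHom.ofInjective hτ).apply_symm_apply
    ⟨α x, (hτφ _).1 (hα x)⟩)⟩

/- The groups `V` and `W` are the kernels of the maps from `B` and `C` to `D`; in positive degrees
these kernels are everything. -/
theorem exists_longExact_of_kernels {A B C D V W : ℕ → Type*} [∀ n, AddCommGroup (A n)]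
    [∀ n, AddCommGroup (B n)] [∀ n, AddCommGroup (C n)] [∀ n, AddCommGroup (D n)]
    [∀ n, AddCommGroup (V n)] [∀ n, AddCommGroup (W n)] [∀ n, Subsingleton (D (n + 1))]
    {α : ∀ n, A n →+ B n} {β : ∀ n, B n →+ C n} {δ : ∀ n, C (n + 1) →+ A n}
    {ι : ∀ n, C n →+ D n} {τ : ∀ n, V n →+ B n} {σ : ∀ n, W n →+ C n}
    (hδα : ∀ n, Function.Exact (δ n) (α n)) (hαβ : ∀ n, Function.Exact (α n) (β n))
    (hβδ : ∀ n, Function.Exact (β (n + 1)) (δ n)) (hβ : Function.Surjective (β 0))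
    (hτ : ∀ n, Function.Injective (τ n)) (hτι : ∀ n, Function.Exact (τ n) (ι n ∘ β n))
    (hσ : ∀ n, Function.Injective (σ n)) (hσι : ∀ n, Function.Exact (σ n) (ι n)) :
    ∃ (a : ∀ n, A n →+ V n) (b : ∀ n, V n →+ W n) (c : ∀ n, W (n + 1) →+ A n),
      (∀ n, Function.Exact (c n) (a n)) ∧ (∀ n, Function.Exact (a n) (b n)) ∧
      (∀ n, Function.Exact (b (n + 1)) (c n)) ∧ Function.Surjective (b 0) := by
  have hσ_surj (n : ℕ) : Function.Surjective (σ (n + 1)) := fun x =>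
    (hσι (n + 1) x).1 (Subsingleton.elim _ _)
  have hτ_surj (n : ℕ) : Function.Surjective (τ (n + 1)) := fun x =>
    (hτι (n + 1) x).1 (Subsingleton.elim _ _)
  choose a ha using fun n => exists_addMonoidHom_lift (hτ n) (hτι n) (α n) fun x => by
    rw [Function.comp_apply, (hαβ n).apply_apply_eq_zero, map_zero]
  choose b hb using fun n => exists_addMonoidHom_lift (hσ n) (hσι n) ((β n).comp (τ n))
    (hτι n).apply_apply_eq_zero
  refine ⟨a, b, fun n => (δ n).comp (σ (n + 1)), fun n => ?_, fun n => ?_, fun n => ?_, ?_⟩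
  · intro x
    have hδσ : Set.range ((δ n).comp (σ (n + 1))) = Set.range (δ n) := (hσ_surj n).range_comp _
    rw [hδσ, ← hδα n x, ← ha, Function.comp_apply, map_eq_zero_iff _ (hτ n)]
  · intro v
    rw [← map_eq_zero_iff _ (hσ n), ← Function.comp_apply (f := σ n), hb, AddMonoidHom.comp_apply,
      hαβ n, ← ha, Set.range_comp, (hτ n).mem_set_image]
  · intro w
    have hbσ : Set.range (β (n + 1)) = σ (n + 1) '' Set.range (b (n + 1)) := by
      rw [← Set.range_comp, hb, AddMonoidHom.coe_comp, (hτ_surj n).range_comp]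
    rw [AddMonoidHom.comp_apply, hβδ n, hbσ, (hσ (n + 1)).mem_set_image]
  · intro w
    obtain ⟨y, hy⟩ := hβ (σ 0 w)
    obtain ⟨v, rfl⟩ := (hτι 0 y).1 (by
      rw [Function.comp_apply, hy, (hσι 0).apply_apply_eq_zero])
    exact ⟨v, hσ 0 ((congr_fun (hb 0) v).trans hy)⟩

end ExactSequences

section LeftDerived

lemma exists_shortComplex_exact_of_iso {D : Type*} [Category* D] [Abelian D]
    {S : ShortComplex D} (hS : S.Exact) {X₁ X₂ X₃ : D} {f : X₁ ⟶ X₂} {g : X₂ ⟶ X₃}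
    (e₁ : X₁ ≅ S.X₁) (e₂ : X₂ ≅ S.X₂) (e₃ : X₃ ≅ S.X₃)
    (hf : f ≫ e₂.hom = e₁.hom ≫ S.f) (hg : g ≫ e₃.hom = e₂.hom ≫ S.g) :
    ∃ w, (ShortComplex.mk f g w).Exact := by
  have w : f ≫ g = 0 := by
    rw [← cancel_mono e₃.hom, Category.assoc, hg, reassoc_of% hf, S.zero, Limits.comp_zero,
      Limits.zero_comp]
  exact ⟨w, (ShortComplex.exact_iff_of_iso
    (ShortComplex.isoMk (S₁ := .mk f g w) e₁ e₂ e₃ hf.symm hg.symm)).2 hS⟩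

variable {C D : Type*} [Category* C] [Category* D] [Abelian C] [Abelian D]

lemma fromLeftDerivedZero'_naturality_functor {F G : C ⥤ D} [F.Additive] [G.Additive] (α : F ⟶ G)
    {X : C} (P : ProjectiveResolution X) :
    HomologicalComplex.opcyclesMap ((NatTrans.mapHomologicalComplex α _).app P.complex) 0 ≫
      P.fromLeftDerivedZero' G = P.fromLeftDerivedZero' F ≫ α.app X := by
  rw [← cancel_epi (HomologicalComplex.pOpcycles _ _),
    HomologicalComplex.p_opcyclesMap_assoc,
    ProjectiveResolution.pOpcycles_comp_fromLeftDerivedZero',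
    ProjectiveResolution.pOpcycles_comp_fromLeftDerivedZero'_assoc]
  exact (α.naturality _).symm

/-- The sequence of complexes obtained by applying a short complex of functors to a projective
resolution; its homology sequence is the long exact sequence of left derived functors. -/
def resolvedShortComplex (S : ShortComplex (C ⥤ D)) [S.X₁.Additive] [S.X₂.Additive]
    [S.X₃.Additive] {X : C} (P : ProjectiveResolution X) : ShortComplex (ChainComplex D ℕ) :=
  .mk ((NatTrans.mapHomologicalComplex S.f _).app P.complex)
    ((NatTrans.mapHomologicalComplex S.g _).app P.complex) <| by
      ext n
      exact NatTrans.congr_app S.zero (P.complex.X n)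

lemma resolvedShortComplex_shortExact (S : ShortComplex (C ⥤ D)) [S.X₁.Additive] [S.X₂.Additive]
    [S.X₃.Additive] (hS : ∀ (P : C) [Projective P], (S.map ((evaluation C D).obj P)).ShortExact)
    {X : C} (P : ProjectiveResolution X) : (resolvedShortComplex S P).ShortExact :=
  HomologicalComplex.shortExact_of_degreewise_shortExact _ fun n => hS (P.complex.X n)

variable [HasProjectiveResolutions C]

/-- The isomorphism computing a left derived functor by a projective resolution, with target
written as the homology object, so that it composes with maps in homology up to syntactic
equality of objects. -/
noncomputable def leftDerivedIsoHomology (F : C ⥤ D) [F.Additive] {X : C}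
    (P : ProjectiveResolution X) (n : ℕ) :
    (F.leftDerived n).obj X ≅ ((F.mapHomologicalComplex _).obj P.complex).homology n :=
  P.isoLeftDerivedObj F n

lemma leftDerived_app_comp_leftDerivedIsoHomology_hom {F G : C ⥤ D} [F.Additive] [G.Additive]
    (α : F ⟶ G) {X : C} (P : ProjectiveResolution X) (n : ℕ) :
    (NatTrans.leftDerived α n).app X ≫ (leftDerivedIsoHomology G P n).hom =
      (leftDerivedIsoHomology F P n).hom ≫ HomologicalComplex.homologyMap
        ((NatTrans.mapHomologicalComplex α _).app P.complex) n := by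
  rw [← Iso.eq_comp_inv, Category.assoc]
  exact P.leftDerived_app_eq α n

lemma leftDerived_zero_comp_fromLeftDerivedZero {F G : C ⥤ D} [F.Additive] [G.Additive]
    (α : F ⟶ G) :
    NatTrans.leftDerived α 0 ≫ G.fromLeftDerivedZero = F.fromLeftDerivedZero ≫ α := by
  ext X
  have P := projectiveResolution X
  have hP (H : C ⥤ D) [H.Additive] : H.fromLeftDerivedZero.app X =
      (leftDerivedIsoHomology H P 0).hom ≫ HomologicalComplex.homologyι _ 0 ≫
        P.fromLeftDerivedZero' H := P.fromLeftDerivedZero_eq H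
  rw [NatTrans.comp_app, NatTrans.comp_app, hP, hP, Category.assoc, Category.assoc,
    reassoc_of% leftDerived_app_comp_leftDerivedIsoHomology_hom,
    HomologicalComplex.homologyι_naturality_assoc, fromLeftDerivedZero'_naturality_functor]

lemma isZero_leftDerived_succ_of_preservesHomology (F : C ⥤ D) [F.Additive] [F.PreservesHomology]
    (X : C) (n : ℕ) : Limits.IsZero ((F.leftDerived (n + 1)).obj X) := by
  have P := projectiveResolution X
  have hP : ((F.mapHomologicalComplex _).obj P.complex).ExactAt (n + 1) := by
    rw [HomologicalComplex.exactAt_iff' _ (n + 2) (n + 1) n (by simp) (by simp)]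
    exact (P.exact_succ n).map F
  exact hP.isZero_homology.of_iso (leftDerivedIsoHomology F P (n + 1))

theorem exists_leftDerived_longExact (S : ShortComplex (C ⥤ D)) [S.X₁.Additive] [S.X₂.Additive]
    [S.X₃.Additive] (hS : ∀ (P : C) [Projective P], (S.map ((evaluation C D).obj P)).ShortExact)
    (X : C) :
    ∃ δ : ∀ n, (S.X₃.leftDerived (n + 1)).obj X ⟶ (S.X₁.leftDerived n).obj X,
      (∀ n, ∃ w, (ShortComplex.mk (δ n) ((NatTrans.leftDerived S.f n).app X) w).Exact) ∧
      (∀ n, ∃ w, (ShortComplex.mk ((NatTrans.leftDerived S.f n).app X)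
        ((NatTrans.leftDerived S.g n).app X) w).Exact) ∧
      ∀ n, ∃ w, (ShortComplex.mk ((NatTrans.leftDerived S.g (n + 1)).app X) (δ n) w).Exact := by
  have P := projectiveResolution X
  have H := resolvedShortComplex_shortExact S hS P
  let e₁ := leftDerivedIsoHomology S.X₁ P
  let e₂ := leftDerivedIsoHomology S.X₂ P
  let e₃ := leftDerivedIsoHomology S.X₃ P
  have hf := leftDerived_app_comp_leftDerivedIsoHomology_hom S.f P
  have hg := leftDerived_app_comp_leftDerivedIsoHomology_hom S.g P
  let δ (n : ℕ) := ((e₃ (n + 1)).hom ≫ H.δ (n + 1) n rfl) ≫ (e₁ n).inv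
  have hδ (n : ℕ) : δ n ≫ (e₁ n).hom = (e₃ (n + 1)).hom ≫ H.δ (n + 1) n rfl :=
    ((Iso.comp_inv_eq _).1 rfl).symm
  exact ⟨δ,
    fun n => exists_shortComplex_exact_of_iso (H.homology_exact₁ (n + 1) n rfl)
      (e₃ (n + 1)) (e₁ n) (e₂ n) (hδ n) (hf n),
    fun n => exists_shortComplex_exact_of_iso (H.homology_exact₂ n)
      (e₁ n) (e₂ n) (e₃ n) (hf n) (hg n),
    fun n => exists_shortComplex_exact_of_iso (H.homology_exact₃ (n + 1) n rfl)
      (e₂ (n + 1)) (e₃ (n + 1)) (e₁ n) (hg (n + 1)) (hδ n)⟩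

end LeftDerived

section Tor

/- The kernel and the cover are existentially quantified, rather than written out, so that
elaboration never unfolds them. -/
lemma exists_free_cover (A Z : Type u) [CommRing A] [AddCommGroup Z] [Module A Z] :
    ∃ (X Y : Type u) (_ : AddCommGroup X) (_ : Module A X) (_ : AddCommGroup Y) (_ : Module A Y)
      (_ : Module.Free A Y) (i : X →ₗ[A] Y) (p : Y →ₗ[A] Z),
      Function.Exact i p ∧ Function.Injective i ∧ Function.Surjective p :=
  let p := Finsupp.linearCombination A (id : Z → Z)
  ⟨LinearMap.ker p, Z →₀ A, inferInstance, inferInstance, inferInstance, inferInstance,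
    inferInstance, (LinearMap.ker p).subtype, p, p.exact_subtype_ker_map,
    (LinearMap.ker p).subtype_injective, Finsupp.linearCombination_id_surjective A Z⟩

variable (A : Type u) [CommRing A] (N : Type u) [AddCommGroup N] [Module A N]
  {X Y Z : Type u} [AddCommGroup X] [Module A X] [AddCommGroup Y] [Module A Y]
  [AddCommGroup Z] [Module A Z]

/-- The `n`-th Tor module of two modules over a commutative ring. -/
noncomputable abbrev TorModule (n : ℕ) (X N : Type u) [AddCommGroup X] [Module A X]
    [AddCommGroup N] [Module A N] : Type u :=
  ((Tor (ModuleCat.{u} A) n).obj (.of A X)).obj (.of A N)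

/-- The map induced on Tor by a linear map in the first variable. -/
noncomputable def torMap (n : ℕ) (g : X →ₗ[A] Y) : TorModule A n X N →ₗ[A] TorModule A n Y N :=
  (((Tor (ModuleCat.{u} A) n).map (ModuleCat.ofHom g)).app (.of A N)).hom

lemma torMap_comp (n : ℕ) (h : Y →ₗ[A] Z) (g : X →ₗ[A] Y) :
    torMap A N n (h ∘ₗ g) = torMap A N n h ∘ₗ torMap A N n g := by
  simp only [torMap, ModuleCat.ofHom_comp, Functor.map_comp, NatTrans.comp_app,
    ModuleCat.hom_comp]

lemma subsingleton_torModule_succ_of_flat [Module.Flat A X] (n : ℕ) :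
    Subsingleton (TorModule A (n + 1) X N) := by
  let F := (tensoringLeft (ModuleCat.{u} A)).obj (.of A X)
  have : F.PreservesHomology := ((Functor.exact_tfae F).out 1 2).1 fun S hS =>
    Module.Flat.lTensor_shortComplex_exact (.of A X) S hS
  exact ModuleCat.subsingleton_of_isZero
    (isZero_leftDerived_succ_of_preservesHomology F (.of A N) n)

instance : Limits.PreservesFiniteColimits ((tensoringLeft (ModuleCat.{u} A)).obj (.of A X)) :=
  inferInstanceAs (Limits.PreservesFiniteColimits (tensorLeft (ModuleCat.of A X)))

variable (X) in
/-- The identification of `Tor₀` with the tensor product. -/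
noncomputable def torZeroEquiv : TorModule A 0 X N ≃ₗ[A] X ⊗[A] N :=
  (((tensoringLeft (ModuleCat.{u} A)).obj (.of A X)).leftDerivedZeroIsoSelf.app
    (.of A N)).toLinearEquiv

lemma torZeroEquiv_torMap (g : X →ₗ[A] Y) (x : TorModule A 0 X N) :
    torZeroEquiv A N Y (torMap A N 0 g x) = g.rTensor N (torZeroEquiv A N X x) :=
  ConcreteCategory.congr_hom (NatTrans.congr_app (leftDerived_zero_comp_fromLeftDerivedZero
    ((tensoringLeft (ModuleCat.{u} A)).map (ModuleCat.ofHom g))) (.of A N)) x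

lemma torMap_zero_injective_iff (g : X →ₗ[A] Y) :
    Function.Injective (torMap A N 0 g) ↔ Function.Injective (g.rTensor N) := by
  rw [← EquivLike.comp_injective _ (torZeroEquiv A N Y), ← EquivLike.injective_comp
    (torZeroEquiv A N X), show torZeroEquiv A N Y ∘ torMap A N 0 g = _ from
      funext (torZeroEquiv_torMap A N g)]
  rfl

lemma torMap_zero_surjective_iff (g : X →ₗ[A] Y) :
    Function.Surjective (torMap A N 0 g) ↔ Function.Surjective (g.rTensor N) := by
  rw [← EquivLike.comp_surjective _ (torZeroEquiv A N Y), ← EquivLike.surjective_comp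
    (torZeroEquiv A N X), show torZeroEquiv A N Y ∘ torMap A N 0 g = _ from
      funext (torZeroEquiv_torMap A N g)]
  rfl

variable {i : X →ₗ[A] Y} {p : Y →ₗ[A] Z}

/-- The sequence of functors `X ⊗ - ⟶ Y ⊗ - ⟶ Z ⊗ -` induced by an exact pair of maps. As `Tor`
derives the second variable of the tensor product, its long exact sequence in the first variable
is that of a sequence of functors. -/
noncomputable abbrev tensoringLeftShortComplex (hip : Function.Exact i p) :
    ShortComplex (ModuleCat.{u} A ⥤ ModuleCat.{u} A) :=
  .mk ((tensoringLeft _).map (ModuleCat.ofHom i)) ((tensoringLeft _).map (ModuleCat.ofHom p)) <| by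
    rw [← Functor.map_comp, ← ModuleCat.ofHom_comp, hip.linearMap_comp_eq_zero]
    exact (tensoringLeft _).map_zero _ _

lemma tensoringLeftShortComplex_evaluation_shortExact (hip : Function.Exact i p)
    (hi : Function.Injective i) (hp : Function.Surjective p) (P : ModuleCat.{u} A)
    [Module.Flat A P] :
    ((tensoringLeftShortComplex A hip).map ((evaluation _ _).obj P)).ShortExact := by
  refine .mk' ?_ ?_ ?_
  · rw [ShortComplex.ShortExact.moduleCat_exact_iff_function_exact]
    exact Module.Flat.rTensor_exact P hip
  · rw [ModuleCat.mono_iff_injective]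
    exact Module.Flat.rTensor_preserves_injective_linearMap (M := P) i hi
  · rw [ModuleCat.epi_iff_surjective]
    exact LinearMap.rTensor_surjective P hp

theorem exists_tor_longExact (hip : Function.Exact i p) (hi : Function.Injective i)
    (hp : Function.Surjective p) :
    ∃ δ : ∀ n, TorModule A (n + 1) Z N →ₗ[A] TorModule A n X N,
      (∀ n, Function.Exact (δ n) (torMap A N n i)) ∧
      (∀ n, Function.Exact (torMap A N n i) (torMap A N n p)) ∧
      ∀ n, Function.Exact (torMap A N (n + 1) p) (δ n) := by
  have hS (P : ModuleCat.{u} A) [Projective P] :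
      ((tensoringLeftShortComplex A hip).map ((evaluation _ _).obj P)).ShortExact := by
    have : Module.Projective A P := (IsProjective.iff_projective P).2 inferInstance
    exact tensoringLeftShortComplex_evaluation_shortExact A hip hi hp P
  obtain ⟨δ, h₁, h₂, h₃⟩ := exists_leftDerived_longExact _ hS (.of A N)
  have exact_of {S : ShortComplex (ModuleCat.{u} A)} (hS : S.Exact) :
      Function.Exact S.f.hom S.g.hom :=
    (ShortComplex.ShortExact.moduleCat_exact_iff_function_exact S).1 hS
  exact ⟨fun n => (δ n).hom, fun n => exact_of (h₁ n).2, fun n => exact_of (h₂ n).2,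
    fun n => exact_of (h₃ n).2⟩

theorem exists_torShift [Module.Flat A Y] (hip : Function.Exact i p) (hi : Function.Injective i)
    (hp : Function.Surjective p) (n : ℕ) :
    ∃ δ : TorModule A (n + 1) Z N →ₗ[A] TorModule A n X N,
      Function.Injective δ ∧ Function.Exact δ (torMap A N n i) := by
  obtain ⟨δ, hδ, -, hpδ⟩ := exists_tor_longExact A N hip hi hp
  have := subsingleton_torModule_succ_of_flat A N (X := Y) n
  exact ⟨δ n, injective_of_exact_of_subsingleton (hpδ n) (map_zero _), hδ n⟩

lemma subsingleton_torModule_one_iff [Module.Flat A Y] (hip : Function.Exact i p)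
    (hi : Function.Injective i) (hp : Function.Surjective p) :
    Subsingleton (TorModule A 1 Z N) ↔ Function.Injective (i.rTensor N) := by
  obtain ⟨δ, hδ, hδi⟩ := exists_torShift A N hip hi hp 0
  rw [← torMap_zero_injective_iff]
  refine ⟨fun _ => injective_of_exact_of_subsingleton hδi (map_zero δ), fun hi₀ => ?_⟩
  refine subsingleton_of_forall_eq 0 fun z => hδ (hi₀ ?_)
  simp only [hδi.apply_apply_eq_zero, map_zero]

lemma subsingleton_torModule_succ_succ_iff [Module.Flat A Y] (hip : Function.Exact i p)
    (hi : Function.Injective i) (hp : Function.Surjective p) (n : ℕ) :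
    Subsingleton (TorModule A (n + 2) Z N) ↔ Subsingleton (TorModule A (n + 1) X N) := by
  obtain ⟨δ, hδ, hδi⟩ := exists_torShift A N hip hi hp (n + 1)
  have := subsingleton_torModule_succ_of_flat A N (X := Y) n
  have hδ' : Function.Surjective δ := fun x => (hδi x).1 (Subsingleton.elim _ _)
  exact (Equiv.ofBijective δ ⟨hδ, hδ'⟩).subsingleton_congr

end Tor

section BaseChange

/-- Two modules over `Q` are Tor-independent if all their higher Tor vanish; if `R` is an algebra,
base change to `R` then preserves free resolutions of `K`. -/
def TorIndependent (Q K R : Type u) [CommRing Q] [AddCommGroup K] [Module Q K]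
    [AddCommGroup R] [Module Q R] : Prop :=
  ∀ n, Subsingleton (TorModule Q (n + 1) K R)

variable {Q : Type u} [CommRing Q]

variable {K F Z : Type u} [AddCommGroup K] [Module Q K] [AddCommGroup F] [Module Q F]
  [AddCommGroup Z] [Module Q Z] {i : K →ₗ[Q] F} {p : F →ₗ[Q] Z}

section
variable (R : Type u) [CommRing R] [Algebra Q R]

lemma baseChange_exact (hip : Function.Exact i p) (hp : Function.Surjective p) :
    Function.Exact (i.baseChange R) (p.baseChange R) :=
  lTensor_exact R hip hp

lemma baseChange_injective_iff_subsingleton_torModule [Module.Flat Q F]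
    (hip : Function.Exact i p) (hi : Function.Injective i) (hp : Function.Surjective p) :
    Function.Injective (i.baseChange R) ↔ Subsingleton (TorModule Q 1 Z R) :=
  (LinearMap.lTensor_inj_iff_rTensor_inj R i).trans
    (subsingleton_torModule_one_iff Q R hip hi hp).symm

end

variable {R : Type u} [CommRing R] [Algebra Q R] (N : Type u) [AddCommGroup N] [Module Q N]
  [Module R N]

lemma nonempty_torBaseChangeEquiv_succ [Module.Flat Q F] [Subsingleton (TorModule Q 1 Z R)]
    (hip : Function.Exact i p) (hi : Function.Injective i) (hp : Function.Surjective p) (n : ℕ)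
    (e : TorModule Q n K N ≃+ TorModule R n (R ⊗[Q] K) N)
    (he : ∀ x, torMap Q N n i x = 0 ↔ torMap R N n (i.baseChange R) (e x) = 0) :
    Nonempty (TorModule Q (n + 1) Z N ≃+ TorModule R (n + 1) (R ⊗[Q] Z) N) := by
  obtain ⟨δ, hδ, hδi⟩ := exists_torShift Q N hip hi hp n
  obtain ⟨δ', hδ', hδi'⟩ := exists_torShift R N (baseChange_exact R hip hp)
    ((baseChange_injective_iff_subsingleton_torModule R hip hi hp).2 inferInstance)
    (p.lTensor_surjective R hp) n
  exact nonempty_addEquiv_of_exact (d := δ.toAddMonoidHom) (d' := δ'.toAddMonoidHom)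
    hδ hδi hδ' hδi' e he

variable [IsScalarTower Q R N]

variable (R K) in
/-- The isomorphism `K ⊗ N ≃ (R ⊗ K) ⊗ N` for an `R`-module `N`, with the base changed factor
on the left. -/
noncomputable def tensorBaseChangeEquiv : K ⊗[Q] N ≃+ (R ⊗[Q] K) ⊗[R] N :=
  (TensorProduct.comm Q K N).toAddEquiv.trans
    ((AlgebraTensorModule.cancelBaseChange Q R R N K).symm ≪≫ₗ
      TensorProduct.comm R N (R ⊗[Q] K)).toAddEquiv

lemma tensorBaseChangeEquiv_tmul (k : K) (y : N) :
    tensorBaseChangeEquiv K R N (k ⊗ₜ y) = ((1 : R) ⊗ₜ[Q] k) ⊗ₜ[R] y := by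
  simp [tensorBaseChangeEquiv]

lemma tensorBaseChangeEquiv_rTensor (g : K →ₗ[Q] F) (x : K ⊗[Q] N) :
    tensorBaseChangeEquiv F R N (g.rTensor N x) =
      (g.baseChange R).rTensor N (tensorBaseChangeEquiv K R N x) := by
  induction x with
  | zero => simp
  | add x y hx hy => simp only [map_add, hx, hy]
  | tmul k y => simp [tensorBaseChangeEquiv_tmul]

variable (R K) in
/-- The comparison isomorphism `Tor₀^Q(K, N) ≃ Tor₀^R(R ⊗ K, N)`. -/
noncomputable def torZeroBaseChangeEquiv :
    TorModule Q 0 K N ≃+ TorModule R 0 (R ⊗[Q] K) N :=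
  (torZeroEquiv Q N K).toAddEquiv.trans
    ((tensorBaseChangeEquiv K R N).trans (torZeroEquiv R N (R ⊗[Q] K)).symm.toAddEquiv)

lemma torZeroBaseChangeEquiv_torMap (g : K →ₗ[Q] F) (x : TorModule Q 0 K N) :
    torZeroBaseChangeEquiv F R N (torMap Q N 0 g x) =
      torMap R N 0 (g.baseChange R) (torZeroBaseChangeEquiv K R N x) := by
  apply (torZeroEquiv R N (R ⊗[Q] F)).injective
  simp [torZeroBaseChangeEquiv, torZeroEquiv_torMap, tensorBaseChangeEquiv_rTensor]

variable (K) in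
theorem exists_torBaseChangeEquiv (n : ℕ) (hK : TorIndependent Q K R) :
    ∃ e : TorModule Q n K N ≃+ TorModule R n (R ⊗[Q] K) N,
      ∀ (F : Type u) [AddCommGroup F] [Module Q F] [Module.Flat Q F] (g : K →ₗ[Q] F) x,
        torMap Q N n g x = 0 ↔ torMap R N n (g.baseChange R) (e x) = 0 := by
  induction n generalizing K with
  | zero =>
    refine ⟨torZeroBaseChangeEquiv K R N, fun F _ _ _ g x => ?_⟩
    rw [← torZeroBaseChangeEquiv_torMap, AddEquiv.map_eq_zero_iff]
  | succ n ih =>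
    obtain ⟨L, P, _, _, _, _, _, i, p, hip, hi, hp⟩ := exists_free_cover Q K
    have := hK 0
    have hL : TorIndependent Q L R := fun m =>
      (subsingleton_torModule_succ_succ_iff Q R hip hi hp m).1 (hK (m + 1))
    obtain ⟨e, he⟩ := ih L hL
    obtain ⟨e'⟩ := nonempty_torBaseChangeEquiv_succ N hip hi hp n e (he P i)
    refine ⟨e', fun F _ _ _ g x => ?_⟩
    have := subsingleton_torModule_succ_of_flat Q N (X := F) n
    have := subsingleton_torModule_succ_of_flat R N (X := R ⊗[Q] F) n
    exact iff_of_true (Subsingleton.elim _ _) (Subsingleton.elim _ _)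

theorem exists_torShift_baseChange [Module.Flat Q F] (hK : TorIndependent Q K R)
    (hip : Function.Exact i p) (hi : Function.Injective i) (hp : Function.Surjective p) (n : ℕ) :
    ∃ τ : TorModule Q (n + 1) Z N →+ TorModule R n (R ⊗[Q] K) N,
      Function.Injective τ ∧ Function.Exact τ (torMap R N n (i.baseChange R)) := by
  obtain ⟨δ, hδ, hδi⟩ := exists_torShift Q N hip hi hp n
  obtain ⟨e, he⟩ := exists_torBaseChangeEquiv K N n hK
  refine ⟨e.toAddMonoidHom.comp δ.toAddMonoidHom, e.injective.comp hδ, fun y => ?_⟩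
  obtain ⟨x, rfl⟩ := e.surjective y
  rw [← he F i x, hδi x]
  simp

end BaseChange

section Hypersurface

variable {Q : Type u} [CommRing Q] {f : Q} {K F M T : Type u} [AddCommGroup K] [Module Q K]
  [AddCommGroup F] [Module Q F] [AddCommGroup M] [Module Q M] [AddCommGroup T] [Module Q T]
  {i : K →ₗ[Q] F} {p : F →ₗ[Q] M}

variable (f K) in
lemma exact_lsmul_tensorProduct_mk_one :
    Function.Exact (LinearMap.lsmul Q K f)
      (TensorProduct.mk Q (Q ⧸ Ideal.span {f}) K 1) := by
  intro k
  rw [← (quotTensorEquivQuotSMul K (Ideal.span {f})).map_eq_zero_iff, TensorProduct.mk_apply,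
    quotTensorEquivQuotSMul_mk_one_tmul, Submodule.Quotient.mk_eq_zero,
    Submodule.ideal_span_singleton_smul, Submodule.mem_smul_pointwise_iff_exists]
  simp

lemma exact_zero_lsmul_iff :
    Function.Exact (0 : PUnit.{u + 1} →ₗ[Q] F) (LinearMap.lsmul Q F f) ↔ IsSMulRegular F f :=
  LinearMap.exact_zero_iff_injective _ _

lemma exists_snake_baseChange (hF : IsSMulRegular F f) (hip : Function.Exact i p)
    (hi : Function.Injective i) (hp : Function.Surjective p) (t : T →ₗ[Q] M)
    (ht : Function.Injective t) (htf : Function.Exact t (LinearMap.lsmul Q M f)) :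
    ∃ δ : T →ₗ[Q] (Q ⧸ Ideal.span {f}) ⊗[Q] K, Function.Injective δ ∧
      Function.Exact δ (i.baseChange (Q ⧸ Ideal.span {f})) := by
  have hiK : i ∘ₗ LinearMap.lsmul Q K f = LinearMap.lsmul Q F f ∘ₗ i := by ext; simp
  have hpF : p ∘ₗ LinearMap.lsmul Q F f = LinearMap.lsmul Q M f ∘ₗ p := by ext; simp
  let δ := SnakeLemma.δ' _ _ _ i p hip i p hip hiK hpF t htf _
    (exact_lsmul_tensorProduct_mk_one f K) hp hi
  have hδ : Function.Exact (0 : PUnit.{u + 1} →ₗ[Q] T) δ :=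
    SnakeLemma.exact_δ'_right _ _ _ i p hip i p hip hiK hpF _ (exact_zero_lsmul_iff.2 hF) t htf _
      (exact_lsmul_tensorProduct_mk_one f K) hp hi 0 (by simp) ht
  have hδi : Function.Exact δ (i.lTensor (Q ⧸ Ideal.span {f})) :=
    SnakeLemma.exact_δ'_left _ _ _ i p hip i p hip hiK hpF t htf _
      (exact_lsmul_tensorProduct_mk_one f K) _ (exact_lsmul_tensorProduct_mk_one f F) hp hi _
      (by ext; simp) (TensorProduct.mk_surjective _ _ _ Ideal.Quotient.mk_surjective)
  exact ⟨δ, (LinearMap.exact_zero_iff_injective _ _).1 hδ, hδi⟩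

lemma baseChange_injective_of_isSMulRegular (hF : IsSMulRegular F f) (hM : IsSMulRegular M f)
    (hip : Function.Exact i p) (hi : Function.Injective i) (hp : Function.Surjective p) :
    Function.Injective (i.baseChange (Q ⧸ Ideal.span {f})) := by
  obtain ⟨δ, -, hδ⟩ := exists_snake_baseChange hF hip hi hp (0 : PUnit.{u + 1} →ₗ[Q] M)
    (Function.injective_of_subsingleton _) (exact_zero_lsmul_iff.2 hM)
  exact injective_of_exact_of_subsingleton hδ (map_zero δ)

lemma torIndependent_of_isSMulRegular (hf : f ∈ nonZeroDivisors Q) (hK : IsSMulRegular K f) :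
    TorIndependent Q K (Q ⧸ Ideal.span {f}) := by
  intro n
  induction n generalizing K with
  | zero =>
    obtain ⟨L, F, _, _, _, _, _, i, p, hip, hi, hp⟩ := exists_free_cover Q K
    exact (baseChange_injective_iff_subsingleton_torModule _ hip hi hp).1
      (baseChange_injective_of_isSMulRegular (Module.Flat.isSMulRegular_of_nonZeroDivisors hf)
        hK hip hi hp)
  | succ n ih =>
    obtain ⟨L, F, _, _, _, _, _, i, p, hip, hi, hp⟩ := exists_free_cover Q K
    exact (subsingleton_torModule_succ_succ_iff Q _ hip hi hp n).2
      (ih ((Module.Flat.isSMulRegular_of_nonZeroDivisors hf).of_injective i hi))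

lemma exists_exact_baseChange (hF : IsSMulRegular F f)
    [Module (Q ⧸ Ideal.span {f}) M] [IsScalarTower Q (Q ⧸ Ideal.span {f}) M]
    (hip : Function.Exact i p) (hi : Function.Injective i) (hp : Function.Surjective p) :
    ∃ α : M →ₗ[Q ⧸ Ideal.span {f}] (Q ⧸ Ideal.span {f}) ⊗[Q] K, Function.Injective α ∧
      Function.Exact α (i.baseChange (Q ⧸ Ideal.span {f})) := by
  have hM : LinearMap.lsmul Q M f = 0 := by
    ext m
    simp [← algebraMap_smul (Q ⧸ Ideal.span {f}) f m]
  obtain ⟨α, hα, hαi⟩ := exists_snake_baseChange hF hip hi hp LinearMap.id Function.injective_id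
    (hM ▸ (LinearMap.exact_zero_iff_surjective _ _).2 Function.surjective_id)
  exact ⟨α.extendScalarsOfSurjective Ideal.Quotient.mk_surjective, hα, hαi⟩

lemma exact_baseChange_liftBaseChange {R : Type u} [CommRing R] [Algebra Q R]
    (hR : Function.Surjective (algebraMap Q R)) [Module R M] [IsScalarTower Q R M]
    (hip : Function.Exact i p) :
    Function.Exact (i.baseChange R) (p.liftBaseChange R) := by
  intro z
  obtain ⟨x, rfl⟩ := TensorProduct.mk_surjective Q F R hR z
  rw [TensorProduct.mk_apply, LinearMap.liftBaseChange_tmul, one_smul]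
  constructor
  · intro hx
    obtain ⟨k, rfl⟩ := (hip x).1 hx
    exact ⟨1 ⊗ₜ k, i.baseChange_tmul _ _⟩
  · rintro ⟨y, hy⟩
    obtain ⟨k, rfl⟩ := TensorProduct.mk_surjective Q K R hR y
    have hpy := congr_arg (p.liftBaseChange R) hy
    rw [TensorProduct.mk_apply, LinearMap.baseChange_tmul, LinearMap.liftBaseChange_tmul,
      LinearMap.liftBaseChange_tmul, one_smul, one_smul, hip.apply_apply_eq_zero] at hpy
    exact hpy.symm

lemma liftBaseChange_surjective (R : Type u) [CommRing R] [Algebra Q R] [Module R M]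
    [IsScalarTower Q R M] (hp : Function.Surjective p) :
    Function.Surjective (p.liftBaseChange R) := fun m => by
  obtain ⟨x, rfl⟩ := hp m
  exact ⟨1 ⊗ₜ x, by rw [LinearMap.liftBaseChange_tmul, one_smul]⟩

end Hypersurface

section Extension

variable {R : Type u} [CommRing R] (N : Type u) [AddCommGroup N] [Module R N] {M X P : Type u}
  [AddCommGroup M] [Module R M] [AddCommGroup X] [Module R X] [AddCommGroup P] [Module R P]
  {α : M →ₗ[R] X} {j : X →ₗ[R] P} {ε : P →ₗ[R] M}

theorem exists_tor_longExact_of_twoExtension [Module.Flat R P] (hα : Function.Injective α)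
    (hαj : Function.Exact α j) (hjε : Function.Exact j ε) (hε : Function.Surjective ε)
    {V : ℕ → Type*} [∀ n, AddCommGroup (V n)] {τ : ∀ n, V n →+ TorModule R n X N}
    (hτ : ∀ n, Function.Injective (τ n)) (hτj : ∀ n, Function.Exact (τ n) (torMap R N n j)) :
    ∃ (a : ∀ n, TorModule R n M N →+ V n) (b : ∀ n, V n →+ TorModule R (n + 1) M N)
      (c : ∀ n, TorModule R (n + 2) M N →+ TorModule R n M N),
      (∀ n, Function.Exact (c n) (a n)) ∧ (∀ n, Function.Exact (a n) (b n)) ∧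
      (∀ n, Function.Exact (b (n + 1)) (c n)) ∧ Function.Surjective (b 0) := by
  let β := j.rangeRestrict
  let s := (LinearMap.range j).subtype
  have hαβ : Function.Exact α β := fun x => Subtype.ext_iff.trans (hαj x)
  have hβ : Function.Surjective β := j.surjective_rangeRestrict
  have hsε : Function.Exact s ε := fun x => by simpa [s] using hjε x
  obtain ⟨δ, hδα, hαβ', hβδ⟩ := exists_tor_longExact R N hαβ hα hβ
  choose σ hσ hσs using exists_torShift R N hsε (LinearMap.range j).subtype_injective hε
  have (n : ℕ) := subsingleton_torModule_succ_of_flat R N (X := P) n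
  refine exists_longExact_of_kernels (α := fun n => (torMap R N n α).toAddMonoidHom)
    (β := fun n => (torMap R N n β).toAddMonoidHom) (δ := fun n => (δ n).toAddMonoidHom)
    (ι := fun n => (torMap R N n s).toAddMonoidHom) (σ := fun n => (σ n).toAddMonoidHom)
    hδα hαβ' hβδ ((torMap_zero_surjective_iff R N β).2 (LinearMap.rTensor_surjective N hβ))
    hτ (fun n => ?_) hσ hσs
  have hsβ : torMap R N n j = torMap R N n s ∘ₗ torMap R N n β := torMap_comp R N n s β
  have h := hτj n
  rw [hsβ] at h
  exact h

end Extension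

theorem stmt1_general (Q : Type u) [CommRing Q] (f : Q) (hf : f ∈ nonZeroDivisors Q)
    (M N : Type u) [AddCommGroup M] [AddCommGroup N] [Module Q M] [Module Q N]
    [Module (Q ⧸ Ideal.span {f}) M] [Module (Q ⧸ Ideal.span {f}) N]
    [IsScalarTower Q (Q ⧸ Ideal.span {f}) M] [IsScalarTower Q (Q ⧸ Ideal.span {f}) N] :
    ∃ (a : ∀ n, TorModule (Q ⧸ Ideal.span {f}) n M N →+ TorModule Q (n + 1) M N)
      (b : ∀ n, TorModule Q (n + 1) M N →+ TorModule (Q ⧸ Ideal.span {f}) (n + 1) M N)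
      (c : ∀ n, TorModule (Q ⧸ Ideal.span {f}) (n + 2) M N →+
        TorModule (Q ⧸ Ideal.span {f}) n M N),
      (∀ n, Function.Exact (c n) (a n)) ∧ (∀ n, Function.Exact (a n) (b n)) ∧
      (∀ n, Function.Exact (b (n + 1)) (c n)) ∧ Function.Surjective (b 0) := by
  obtain ⟨K, F, _, _, _, _, _, i, p, hip, hi, hp⟩ := exists_free_cover Q M
  have hF : IsSMulRegular F f := Module.Flat.isSMulRegular_of_nonZeroDivisors hf
  have hK : TorIndependent Q K (Q ⧸ Ideal.span {f}) :=
    torIndependent_of_isSMulRegular hf (hF.of_injective i hi)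
  obtain ⟨α, hα, hαi⟩ := exists_exact_baseChange hF hip hi hp
  choose τ hτ hτi using exists_torShift_baseChange N hK hip hi hp
  exact exists_tor_longExact_of_twoExtension N hα hαi
    (exact_baseChange_liftBaseChange Ideal.Quotient.mk_surjective hip)
    (liftBaseChange_surjective _ hp) hτ hτi

/-- Let `Q` be a Noetherian local ring, `f` a nonzerodivisor on `Q`, `R = Q/(f)` and
`M, N` finitely generated `R`-modules.  There is a long exact sequence
`… → Tor_n^R(M,N) → Tor_{n+1}^Q(M,N) → Tor_{n+1}^R(M,N) → Tor_{n-1}^R(M,N) → … →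
Tor_0^R(M,N) → Tor_1^Q(M,N) → Tor_1^R(M,N) → 0`. -/
theorem stmt1 (Q : Type) [CommRing Q] [IsNoetherianRing Q] [IsLocalRing Q]
    (f : Q) (hf : f ∈ nonZeroDivisors Q)
    (M N : Type) [AddCommGroup M] [AddCommGroup N]
    [Module Q M] [Module Q N]
    [Module (Q ⧸ Ideal.span {f}) M] [Module (Q ⧸ Ideal.span {f}) N]
    [IsScalarTower Q (Q ⧸ Ideal.span {f}) M] [IsScalarTower Q (Q ⧸ Ideal.span {f}) N]
    [Module.Finite (Q ⧸ Ideal.span {f}) M] [Module.Finite (Q ⧸ Ideal.span {f}) N] :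
    ∃ (a : ∀ n : ℕ, TorGrp (Q ⧸ Ideal.span {f}) n M N →+ TorGrp Q (n + 1) M N)
      (b : ∀ n : ℕ, TorGrp Q (n + 1) M N →+ TorGrp (Q ⧸ Ideal.span {f}) (n + 1) M N)
      (c : ∀ n : ℕ, TorGrp (Q ⧸ Ideal.span {f}) (n + 2) M N →+
        TorGrp (Q ⧸ Ideal.span {f}) n M N),
      (∀ n, Function.Exact (c n) (a n)) ∧
      (∀ n, Function.Exact (a n) (b n)) ∧
      (∀ n, Function.Exact (b (n + 1)) (c n)) ∧
      Function.Surjective (b 0) :=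
  stmt1_general Q f hf M N
end

section
/- Let Q be a Noetherian ring, f a nonzerodivisor on Q, R = Q/(f), and M, N R-modules. If Tor_i^Q(M,N) = 0 for all i ≥ n, then Tor_i^R(M,N) ≅ Tor_{i+2}^R(M,N) for all i ≥ n − 1. -/
open CategoryTheory

/-- The `i`-th Tor group of two modules over a commutative ring, as an object of `ModuleCat`. -/
noncomputable abbrev TorObj (A : Type) [CommRing A] (i : ℕ)
    (M N : Type) [AddCommGroup M] [Module A M] [AddCommGroup N] [Module A N] :
    ModuleCat.{0} A :=
  ((Tor (ModuleCat.{0} A) i).obj (ModuleCat.of A M)).obj (ModuleCat.of A N)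

/-!
Present `N` over `Q` as `0 → K → F → N → 0` with `F` free. Reducing modulo `f` gives an exact
sequence `0 → N → R ⊗ K → R ⊗ F → N → 0` of `R`-modules (its left end is `Tor₁^Q(R, N)`). As `R ⊗ F`
is free, `Tor_{i+2}^R(M, N)` is `Tor_{i+1}^R(M, L)` with `L` the image of `R ⊗ K → R ⊗ F`. As `f` is
regular on `K`, the groups `Tor_j^R(M, R ⊗ K) ≅ Tor_j^Q(M, K) ≅ Tor_{j+1}^Q(M, N)` vanish in the
relevant degrees `j > 0`, so that `0 → N → R ⊗ K → L → 0` identifies `Tor_{i+1}^R(M, L)` with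
`Tor_i^R(M, N)`. For `i = 0` this also needs `M ⊗ N → M ⊗ K` to vanish, which holds because
`Tor₁^Q(M, N) = 0` makes `M ⊗ K → M ⊗ F` injective.
-/

section LeftDerived

open Limits

universe v u v' u'

variable {C : Type u} [Category.{v} C] [Abelian C]

lemma shortExact_kernel_ι {X Y : C} (p : X ⟶ Y) [Epi p] :
    (ShortComplex.mk (kernel.ι p) p (kernel.condition p)).ShortExact where
  exact := ShortComplex.exact_kernel p

lemma exact_comp_mono {X₁ X₂ Y Z : C} {d : X₁ ⟶ X₂} {p : X₂ ⟶ Y} {w : d ≫ p = 0}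
    (h : (ShortComplex.mk d p w).Exact) (i : Y ⟶ Z) [Mono i] :
    (ShortComplex.mk d (p ≫ i) (by rw [reassoc_of% w, zero_comp])).Exact := by
  let φ : ShortComplex.mk d p w ⟶ ShortComplex.mk d (p ≫ i) (by rw [reassoc_of% w, zero_comp]) :=
    { τ₁ := 𝟙 _, τ₂ := 𝟙 _, τ₃ := i }
  exact (ShortComplex.exact_iff_of_epi_of_isIso_of_mono φ).1 h

lemma exact_epi_comp {X X₁ X₂ X₃ : C} {d : X₁ ⟶ X₂} {p : X₂ ⟶ X₃} {w : d ≫ p = 0}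
    (h : (ShortComplex.mk d p w).Exact) (e : X ⟶ X₁) [Epi e] :
    (ShortComplex.mk (e ≫ d) p (by rw [Category.assoc, w, comp_zero])).Exact := by
  let φ : ShortComplex.mk (e ≫ d) p (by rw [Category.assoc, w, comp_zero]) ⟶
      ShortComplex.mk d p w :=
    { τ₁ := e, τ₂ := 𝟙 _, τ₃ := 𝟙 _ }
  exact (ShortComplex.exact_iff_of_epi_of_isIso_of_mono φ).2 h

/-- The augmentation `P₀ ⟶ X` of a projective resolution `P` of `X`. It is `P.π.f 0`, whose target,
the degree `0` part of a complex concentrated in degree `0`, is identified with `X`. -/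
noncomputable def augmentation {X : C} (P : ProjectiveResolution X) : P.complex.X 0 ⟶ X :=
  P.π.f 0

instance {X : C} (P : ProjectiveResolution X) : Epi (augmentation P) :=
  inferInstanceAs (Epi (P.π.f 0))

lemma d_comp_augmentation {X : C} (P : ProjectiveResolution X) :
    P.complex.d 1 0 ≫ augmentation P = 0 :=
  P.complex_d_comp_π_f_zero

lemma exact_augmentation {X : C} (P : ProjectiveResolution X) :
    (ShortComplex.mk _ _ (d_comp_augmentation P)).Exact :=
  P.exact₀

lemma quasiIsoAt_zero_of_exact {K : ChainComplex C ℕ} {X : C} {ε : K.X 0 ⟶ X} (hε : Epi ε)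
    (w : K.d 1 0 ≫ ε = 0) (h : (ShortComplex.mk _ _ w).Exact) :
    QuasiIsoAt ((ChainComplex.toSingle₀Equiv K X).symm ⟨ε, w⟩) 0 := by
  generalize hφ : (ChainComplex.toSingle₀Equiv K X).symm ⟨ε, w⟩ = φ
  obtain rfl : φ.f 0 = ε := by
    rw [← hφ, ChainComplex.toSingle₀Equiv_symm_apply_f_zero]
  rw [ChainComplex.quasiIsoAt₀_iff,
    ShortComplex.quasiIso_iff_of_zeros' _ (K.shape 0 0 (by simp)) rfl rfl]
  exact ⟨h, hε⟩

/-- The resolution `⋯ ⟶ P₁ ⟶ P₀ ⟶ S.X₂` of `S.X₃` obtained by splicing a projective resolution `P`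
of `S.X₁` with a short exact sequence `S` whose middle term is projective. -/
noncomputable def splicedResolution {S : ShortComplex C} (hS : S.ShortExact) [Projective S.X₂]
    (P : ProjectiveResolution S.X₁) : ProjectiveResolution S.X₃ where
  complex := P.complex.augment (augmentation P ≫ S.f)
    (by rw [reassoc_of% d_comp_augmentation P, zero_comp])
  projective
    | 0 => ‹_›
    | n + 1 => P.projective n
  π := (ChainComplex.toSingle₀Equiv _ _).symm ⟨S.g,
    show (augmentation P ≫ S.f) ≫ S.g = 0 by rw [Category.assoc, S.zero, comp_zero]⟩
  quasiIso := by
    have := hS.mono_f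
    refine ⟨fun n ↦ ?_⟩
    rcases n with _ | n
    · exact quasiIsoAt_zero_of_exact hS.epi_g _ (exact_epi_comp hS.exact (augmentation P))
    · rw [quasiIsoAt_iff_exactAt' _ _ (ChainComplex.exactAt_succ_single_obj _ _)]
      rcases n with _ | n
      · rw [HomologicalComplex.exactAt_iff' _ 2 1 0 (by simp) (by simp)]
        exact exact_comp_mono (exact_augmentation P) S.f
      · rw [HomologicalComplex.exactAt_iff' _ (n + 3) (n + 2) (n + 1) (by simp) (by simp)]
        exact P.exact_succ n

lemma nonempty_homology_iso_kernel {S : ShortComplex C} {Y : C} {p : S.X₂ ⟶ Y}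
    {w : S.f ≫ p = 0} (h : (ShortComplex.mk S.f p w).Exact) (hp : Epi p) {i : Y ⟶ S.X₃}
    (hg : p ≫ i = S.g) : Nonempty (S.homology ≅ kernel i) := by
  let e := (cokernelIsCokernel S.f).coconePointUniqueUpToIso h.gIsCokernel
  have he : cokernel.π S.f ≫ e.hom = p :=
    (cokernelIsCokernel S.f).comp_coconePointUniqueUpToIso_hom h.gIsCokernel .one
  have hi : cokernel.desc S.f S.g S.zero = e.hom ≫ i := by
    rw [← cancel_epi (cokernel.π S.f), cokernel.π_desc, reassoc_of% he, hg]
  exact ⟨S.homologyIsoKernelDesc ≪≫ kernelIsoOfEq hi ≪≫ kernelIsIsoComp e.hom i⟩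

/-- The snake lemma diagram of a morphism between exact rows, whose kernel and cokernel are taken in
the category of short complexes. -/
noncomputable def kernelCokernelSnake {T₁ T₂ : ShortComplex C} (φ : T₁ ⟶ T₂) (h₁ : T₁.Exact)
    (hg : Epi T₁.g) (h₂ : T₂.Exact) (hf : Mono T₂.f) : ShortComplex.SnakeInput C where
  L₀ := kernel φ
  L₁ := T₁
  L₂ := T₂
  L₃ := cokernel φ
  v₀₁ := kernel.ι φ
  v₁₂ := φ
  v₂₃ := cokernel.π φ
  h₀ := kernelIsKernel φ
  h₃ := cokernelIsCokernel φ
  L₁_exact := h₁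
  epi_L₁_g := hg
  L₂_exact := h₂
  mono_L₂_f := hf

lemma epi_kernel_g_of_epi {T₁ T₂ : ShortComplex C} (φ : T₁ ⟶ T₂) [Epi φ.τ₁] (h₁ : T₁.Exact)
    (hg : Epi T₁.g) (h₂ : T₂.Exact) (hf : Mono T₂.f) : Epi (kernel φ).g := by
  let S := kernelCokernelSnake φ h₁ hg h₂ hf
  have : Epi S.v₁₂.τ₁ := ‹_›
  have hδ : S.δ = 0 := by
    have : S.v₂₃.τ₁ = 0 := by rw [← cancel_epi S.v₁₂.τ₁, S.w₁₃_τ₁, comp_zero]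
    exact (IsZero.of_epi_eq_zero _ this).eq_of_tgt _ _
  exact S.L₁'_exact.epi_f hδ

lemma shortExact_kernel {T₁ T₂ : ShortComplex C} (φ : T₁ ⟶ T₂) [Epi φ.τ₁] (h₁ : T₁.ShortExact)
    (h₂ : T₂.ShortExact) : (kernel φ).ShortExact := by
  let S := kernelCokernelSnake φ h₁.exact h₁.epi_g h₂.exact h₂.mono_f
  have : Mono S.L₁.f := h₁.mono_f
  exact { exact := S.L₀_exact
          mono_f := inferInstanceAs (Mono S.L₀.f)
          epi_g := epi_kernel_g_of_epi φ h₁.exact h₁.epi_g h₂.exact h₂.mono_f }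

lemma nonempty_kernel_iso_kernel {T₁ T₂ : ShortComplex C} (φ : T₁ ⟶ T₂) [IsIso φ.τ₁]
    (h₁ : T₁.Exact) (hg : Epi T₁.g) (h₂ : T₂.Exact) (hf : Mono T₂.f) :
    Nonempty (kernel φ.τ₂ ≅ kernel φ.τ₃) := by
  let S := kernelCokernelSnake φ h₁ hg h₂ hf
  have : Mono S.v₁₂.τ₁ := inferInstanceAs (Mono φ.τ₁)
  have : S.v₀₁.τ₁ = 0 := by rw [← cancel_mono S.v₁₂.τ₁, S.w₀₂_τ₁, zero_comp]
  have : Mono S.L₀.g := S.L₀_exact.mono_g ((IsZero.of_mono_eq_zero _ this).eq_of_src _ _)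
  have : Epi S.L₀.g := epi_kernel_g_of_epi φ h₁ hg h₂ hf
  have : IsIso S.L₀.g := isIso_of_mono_of_epi _
  exact ⟨(kernelIsKernel φ.τ₂).conePointUniqueUpToIso S.h₀τ₂ ≪≫ asIso S.L₀.g ≪≫
    S.h₀τ₃.conePointUniqueUpToIso (limit.isLimit _)⟩

lemma nonempty_kernel_iso_of_comp_mono_eq {A B P Q : C} {i : A ⟶ B} {j : P ⟶ Q} {a : A ⟶ P}
    {b : B ⟶ Q} (w : i ≫ b = a ≫ j) [Mono b] [Mono j] : Nonempty (kernel i ≅ kernel a) :=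
  ⟨(kernelCompMono i b).symm ≪≫ kernelIsoOfEq w ≪≫ kernelCompMono a j⟩

lemma exists_horseshoe [EnoughProjectives C] {S : ShortComplex C} (hS : S.ShortExact) :
    ∃ (P : ShortComplex C) (π : P ⟶ S), Epi π ∧ (kernel π).ShortExact ∧ IsSplitMono P.f ∧
      Projective P.X₁ ∧ Projective P.X₂ ∧ Projective P.X₃ := by
  have := hS.epi_g
  let p₁ := Projective.π S.X₁
  let p₂ := Projective.π S.X₂
  let P : ShortComplex C := ShortComplex.mk biprod.inl biprod.snd
    (biprod.inl_snd (X := Projective.over S.X₁) (Y := Projective.over S.X₂))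
  have hP : P.ShortExact :=
    (ShortComplex.Splitting.ofHasBinaryBiproduct _ _).shortExact
  let π : P ⟶ S :=
    { τ₁ := p₁
      τ₂ := biprod.desc (p₁ ≫ S.f) p₂
      τ₃ := p₂ ≫ S.g
      comm₁₂ := by simp [P]
      comm₂₃ := by ext <;> simp [P] }
  have h₁ : Epi π.τ₁ := Projective.π_epi _
  have h₂ : Epi π.τ₂ := epi_of_epi_fac (biprod.inr_desc _ _)
  have h₃ : Epi π.τ₃ := epi_comp _ _
  have hπ : Epi π := ⟨fun a b w ↦ ShortComplex.hom_ext _ _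
    ((cancel_epi π.τ₁).1 (congr_arg ShortComplex.Hom.τ₁ w))
    ((cancel_epi π.τ₂).1 (congr_arg ShortComplex.Hom.τ₂ w))
    ((cancel_epi π.τ₃).1 (congr_arg ShortComplex.Hom.τ₃ w))⟩
  exact ⟨P, π, hπ, shortExact_kernel π hP hS, inferInstanceAs (IsSplitMono biprod.inl),
    inferInstanceAs (Projective (Projective.over _)), inferInstanceAs (Projective (_ ⊞ _)),
    inferInstanceAs (Projective (Projective.over _))⟩

lemma shortExact_of_isPullback {S : ShortComplex C} (hS : S.ShortExact) {K P : C} {t : K ⟶ S.X₁}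
    {i : K ⟶ P} {p : P ⟶ S.X₂} [Epi p] (sq : IsPullback t i S.f p) :
    (ShortComplex.mk i (p ≫ S.g) (by rw [← sq.w_assoc, S.zero, comp_zero])).ShortExact := by
  have := hS.epi_g
  have := hS.mono_f
  have hi : Mono i := sq.mono_snd_of_mono
  exact
    { exact := ShortComplex.exact_of_f_is_kernel _ (KernelFork.IsLimit.ofι' _ _ fun x hx ↦
        ⟨sq.lift (hS.exact.lift (x ≫ p) (by simpa using hx)) x (by simp), by simp⟩)
      mono_f := hi
      epi_g := epi_comp _ _ }

variable {D : Type u'} [Category.{v'} D] [Abelian D] (F : C ⥤ D) [F.Additive]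

lemma exact_map_kernel_ι [PreservesFiniteColimits F] {X Y : C} (p : X ⟶ Y) [Epi p] :
    ((ShortComplex.mk _ _ (kernel.condition p)).map F).Exact :=
  (ShortComplex.exact_kernel p).map_of_epi_of_preservesCokernel F inferInstance inferInstance

variable [EnoughProjectives C]

lemma nonempty_leftDerived_iso_of_projective {S : ShortComplex C} (hS : S.ShortExact)
    (hP : Projective S.X₂) (n : ℕ) :
    Nonempty ((F.leftDerived (n + 2)).obj S.X₃ ≅ (F.leftDerived (n + 1)).obj S.X₁) := by
  let P := projectiveResolution S.X₁
  let K := (F.mapHomologicalComplex _).obj P.complex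
  let K' := (F.mapHomologicalComplex _).obj (splicedResolution hS P).complex
  exact ⟨(splicedResolution hS P).isoLeftDerivedObj F (n + 2) ≪≫
    ShortComplex.homologyMapIso (K'.isoSc' (n + 3) (n + 2) (n + 1) (by simp) (by simp)) ≪≫
    (ShortComplex.homologyMapIso (K.isoSc' (n + 2) (n + 1) n (by simp) (by simp))).symm ≪≫
    (P.isoLeftDerivedObj F (n + 1)).symm⟩

variable [PreservesFiniteColimits F]

lemma nonempty_leftDerived_one_iso_kernel_of_projective {S : ShortComplex C} (hS : S.ShortExact)
    (hP : Projective S.X₂) :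
    Nonempty ((F.leftDerived 1).obj S.X₃ ≅ kernel (F.map S.f)) := by
  let P := projectiveResolution S.X₁
  let K := (F.mapHomologicalComplex _).obj (splicedResolution hS P).complex
  have hFP := (exact_augmentation P).map_of_epi_of_preservesCokernel F inferInstance inferInstance
  obtain ⟨e⟩ := nonempty_homology_iso_kernel (S := K.sc' 2 1 0) hFP
    (inferInstanceAs (Epi (F.map (augmentation P)))) (F.map_comp (augmentation P) S.f).symm
  exact ⟨(splicedResolution hS P).isoLeftDerivedObj F 1 ≪≫
    ShortComplex.homologyMapIso (K.isoSc' 2 1 0 (by simp) (by simp)) ≪≫ e⟩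

lemma mono_map_of_isZero_leftDerived_one {S : ShortComplex C} (hS : S.ShortExact)
    (hP : Projective S.X₂) (h : IsZero ((F.leftDerived 1).obj S.X₃)) : Mono (F.map S.f) := by
  obtain ⟨e⟩ := nonempty_leftDerived_one_iso_kernel_of_projective F hS hP
  exact Preadditive.mono_of_isZero_kernel _ (h.of_iso e.symm)

lemma nonempty_leftDerived_one_iso_kernel {S : ShortComplex C} (hS : S.ShortExact)
    (h : IsZero ((F.leftDerived 1).obj S.X₂)) :
    Nonempty ((F.leftDerived 1).obj S.X₃ ≅ kernel (F.map S.f)) := by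
  let p := Projective.π S.X₂
  have sq := IsPullback.of_hasPullback S.f p
  let φ : ShortComplex.mk _ _ (kernel.condition (pullback.fst S.f p)) ⟶
      ShortComplex.mk _ _ (kernel.condition p) :=
    { τ₁ := kernel.map _ _ _ _ sq.w
      τ₂ := pullback.snd S.f p
      τ₃ := S.f
      comm₂₃ := sq.w.symm }
  have : IsIso φ.τ₁ := isIso_kernel_map_of_isPullback sq
  have : IsIso (F.mapShortComplex.map φ).τ₁ := inferInstanceAs (IsIso (F.map φ.τ₁))
  obtain ⟨e⟩ := nonempty_leftDerived_one_iso_kernel_of_projective F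
    (shortExact_of_isPullback hS sq) (Projective.projective_over _)
  have hp := mono_map_of_isZero_leftDerived_one F (shortExact_kernel_ι p)
    (Projective.projective_over _) h
  obtain ⟨e'⟩ := nonempty_kernel_iso_kernel (F.mapShortComplex.map φ)
    (exact_map_kernel_ι F _) (inferInstanceAs (Epi (F.map (pullback.fst S.f p))))
    (exact_map_kernel_ι F p) hp
  exact ⟨e ≪≫ e'⟩

lemma nonempty_leftDerived_iso_of_isZero (n : ℕ) {S : ShortComplex C} (hS : S.ShortExact)
    (h₁ : IsZero ((F.leftDerived (n + 1)).obj S.X₂))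
    (h₂ : IsZero ((F.leftDerived (n + 2)).obj S.X₂)) :
    Nonempty ((F.leftDerived (n + 2)).obj S.X₃ ≅ (F.leftDerived (n + 1)).obj S.X₁) := by
  induction n generalizing S with
  | zero =>
    obtain ⟨P, π, hπ, hK, _, hP₁, hP₂, hP₃⟩ := exists_horseshoe hS
    have H₁ := (shortExact_kernel_ι π).map_of_exact ShortComplex.π₁
    have H₂ := (shortExact_kernel_ι π).map_of_exact ShortComplex.π₂
    have H₃ := (shortExact_kernel_ι π).map_of_exact ShortComplex.π₃
    obtain ⟨e₁⟩ := nonempty_leftDerived_one_iso_kernel_of_projective F H₁ hP₁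
    obtain ⟨e₂⟩ := nonempty_leftDerived_iso_of_projective F H₂ hP₂ 0
    obtain ⟨e₃⟩ := nonempty_leftDerived_iso_of_projective F H₃ hP₃ 0
    obtain ⟨e⟩ := nonempty_leftDerived_one_iso_kernel F hK (h₂.of_iso e₂.symm)
    have w : F.map (kernel π).f ≫ F.map (kernel.ι π).τ₂ = F.map (kernel.ι π).τ₁ ≫ F.map P.f := by
      simp only [← F.map_comp, (kernel.ι π).comm₁₂]
    have : Mono (F.map (kernel.ι π).τ₂) := mono_map_of_isZero_leftDerived_one F H₂ hP₂ h₁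
    obtain ⟨e'⟩ := nonempty_kernel_iso_of_comp_mono_eq w
    exact ⟨e₃ ≪≫ e ≪≫ e' ≪≫ e₁.symm⟩
  | succ n ih =>
    obtain ⟨P, π, hπ, hK, _, hP₁, hP₂, hP₃⟩ := exists_horseshoe hS
    have H₁ := (shortExact_kernel_ι π).map_of_exact ShortComplex.π₁
    have H₂ := (shortExact_kernel_ι π).map_of_exact ShortComplex.π₂
    have H₃ := (shortExact_kernel_ι π).map_of_exact ShortComplex.π₃
    obtain ⟨e₁⟩ := nonempty_leftDerived_iso_of_projective F H₁ hP₁ n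
    obtain ⟨e₂⟩ := nonempty_leftDerived_iso_of_projective F H₂ hP₂ n
    obtain ⟨e₂'⟩ := nonempty_leftDerived_iso_of_projective F H₂ hP₂ (n + 1)
    obtain ⟨e₃⟩ := nonempty_leftDerived_iso_of_projective F H₃ hP₃ (n + 1)
    obtain ⟨e⟩ := ih hK (h₁.of_iso e₂.symm) (h₂.of_iso e₂'.symm)
    exact ⟨e₃ ≪≫ e ≪≫ e₁.symm⟩

end LeftDerived

section Exact

variable {A X Y Z : Type*} [Ring A] [AddCommGroup X] [Module A X] [AddCommGroup Y] [Module A Y]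
  [AddCommGroup Z] [Module A Z] {i : X →ₗ[A] Y} {p : Y →ₗ[A] Z}

lemma exact_subtype_range (h : Function.Exact i p) : Function.Exact i.range.subtype p := by
  rw [LinearMap.exact_iff, Submodule.range_subtype, h.linearMap_ker_eq]

lemma exact_rangeRestrict (h : Function.Exact i p) : Function.Exact i p.rangeRestrict := by
  rw [LinearMap.exact_iff, LinearMap.ker_rangeRestrict, h.linearMap_ker_eq]

end Exact

section Tor

open Limits

universe u

variable {A M X Y Z : Type u} [CommRing A] [AddCommGroup M] [Module A M] [AddCommGroup X]
  [Module A X] [AddCommGroup Y] [Module A Y] [AddCommGroup Z] [Module A Z]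

variable (A M) in
/-- The functor `M ⊗[A] -`. -/
noncomputable abbrev tensorWith : ModuleCat.{u} A ⥤ ModuleCat.{u} A :=
  (MonoidalCategory.tensoringLeft (ModuleCat.{u} A)).obj (ModuleCat.of A M)

variable (A M X) in
/-- `Tor_n^A(M, X)` for unbundled modules in an arbitrary universe; in universe `0` it agrees
definitionally with `TorObj A n M X`. -/
noncomputable abbrev tor (n : ℕ) : ModuleCat.{u} A :=
  ((Tor (ModuleCat.{u} A) n).obj (ModuleCat.of A M)).obj (ModuleCat.of A X)

/-- The short complex of bundled modules given by an exact pair of linear maps. -/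
abbrev shortComplexOfExact {i : X →ₗ[A] Y} {p : Y →ₗ[A] Z} (h : Function.Exact i p) :
    ShortComplex (ModuleCat.{u} A) :=
  .moduleCatMk i p h.linearMap_comp_eq_zero

lemma shortExact_shortComplexOfExact {i : X →ₗ[A] Y} {p : Y →ₗ[A] Z} (h : Function.Exact i p)
    (hi : Function.Injective i) (hp : Function.Surjective p) :
    (shortComplexOfExact h).ShortExact where
  exact := (ShortComplex.ShortExact.moduleCat_exact_iff_function_exact _).2 h
  mono_f := (ModuleCat.mono_iff_injective _).2 hi
  epi_g := (ModuleCat.epi_iff_surjective _).2 hp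

lemma projective_moduleCatOf [Module.Projective A X] : Projective (ModuleCat.of A X) :=
  (IsProjective.iff_projective X).1 ‹_›

lemma mono_tensorWith_map_iff {g : X →ₗ[A] Y} :
    Mono ((tensorWith A M).map (ModuleCat.ofHom g)) ↔ Function.Injective (g.lTensor M) :=
  ModuleCat.mono_iff_injective _

lemma isZero_tor_one_of_injective_lTensor [Module.Projective A Y] {i : X →ₗ[A] Y} {p : Y →ₗ[A] Z}
    (h : Function.Exact i p) (hi : Function.Injective i) (hp : Function.Surjective p)
    (hM : Function.Injective (i.lTensor M)) : IsZero (tor A M Z 1) := by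
  obtain ⟨e⟩ := nonempty_leftDerived_one_iso_kernel_of_projective (tensorWith A M)
    (shortExact_shortComplexOfExact h hi hp) projective_moduleCatOf
  have : Mono ((tensorWith A M).map (ModuleCat.ofHom i)) := mono_tensorWith_map_iff.2 hM
  exact (isZero_kernel_of_mono ((tensorWith A M).map (ModuleCat.ofHom i))).of_iso e

lemma injective_lTensor_of_isZero_tor_one [Module.Projective A X] {p : X →ₗ[A] Y}
    (hp : Function.Surjective p) (h : IsZero (tor A M Y 1)) :
    Function.Injective (p.ker.subtype.lTensor M) := by
  have hS := shortExact_shortComplexOfExact p.exact_subtype_ker_map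
    (Submodule.injective_subtype _) hp
  have := mono_map_of_isZero_leftDerived_one (tensorWith A M) hS projective_moduleCatOf h
  exact mono_tensorWith_map_iff.1 this

variable (M) in
lemma nonempty_tor_iso_tor_of_projective [Module.Projective A Y] {i : X →ₗ[A] Y} {p : Y →ₗ[A] Z}
    (h : Function.Exact i p) (hi : Function.Injective i) (hp : Function.Surjective p) (n : ℕ) :
    Nonempty (tor A M Z (n + 2) ≅ tor A M X (n + 1)) :=
  nonempty_leftDerived_iso_of_projective (tensorWith A M) (shortExact_shortComplexOfExact h hi hp)
    projective_moduleCatOf n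

variable (M) in
lemma nonempty_tor_iso_tor_ker [Module.Projective A X] {p : X →ₗ[A] Y}
    (hp : Function.Surjective p) (n : ℕ) :
    Nonempty (tor A M Y (n + 2) ≅ tor A M p.ker (n + 1)) :=
  nonempty_tor_iso_tor_of_projective M p.exact_subtype_ker_map (Submodule.injective_subtype _) hp n

variable (M) in
lemma nonempty_tor_iso_tor_range_of_projective [Module.Projective A Y] {i : X →ₗ[A] Y}
    {p : Y →ₗ[A] Z} (h : Function.Exact i p) (hp : Function.Surjective p) (n : ℕ) :
    Nonempty (tor A M Z (n + 2) ≅ tor A M i.range (n + 1)) :=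
  nonempty_tor_iso_tor_of_projective M (exact_subtype_range h) (Submodule.injective_subtype _) hp n

lemma nonempty_tor_range_iso_tor_of_isZero {i : X →ₗ[A] Y} {p : Y →ₗ[A] Z}
    (h : Function.Exact i p) (hi : Function.Injective i) {n : ℕ}
    (h₁ : IsZero (tor A M Y (n + 1))) (h₂ : IsZero (tor A M Y (n + 2))) :
    Nonempty (tor A M p.range (n + 2) ≅ tor A M X (n + 1)) :=
  nonempty_leftDerived_iso_of_isZero (tensorWith A M) n
    (shortExact_shortComplexOfExact (exact_rangeRestrict h) hi p.surjective_rangeRestrict) h₁ h₂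

lemma nonempty_tor_one_range_iso_tor_zero {i : X →ₗ[A] Y} {p : Y →ₗ[A] Z}
    (h : Function.Exact i p) (hi : Function.Injective i) (h₁ : IsZero (tor A M Y 1))
    (hM : i.lTensor M = 0) : Nonempty (tor A M p.range 1 ≅ tor A M X 0) := by
  obtain ⟨e⟩ := nonempty_leftDerived_one_iso_kernel (tensorWith A M)
    (shortExact_shortComplexOfExact (exact_rangeRestrict h) hi p.surjective_rangeRestrict) h₁
  have hM' : (tensorWith A M).map (ModuleCat.ofHom i) = 0 := ModuleCat.hom_ext hM
  exact ⟨e ≪≫ kernelIsoOfEq hM' ≪≫ kernelZeroIsoSource ≪≫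
    ((tensorWith A M).leftDerivedZeroIsoSelf.app (ModuleCat.of A X)).symm⟩

end Tor

section BaseChange

open TensorProduct

variable {Q : Type*} [CommRing Q] {f : Q}

lemma exists_one_tmul_eq (I : Ideal Q) {P : Type*} [AddCommGroup P] [Module Q P]
    (x : (Q ⧸ I) ⊗[Q] P) : ∃ p : P, (1 : Q ⧸ I) ⊗ₜ[Q] p = x :=
  TensorProduct.mk_surjective Q P (Q ⧸ I) Ideal.Quotient.mk_surjective x

lemma one_tmul_eq_zero_iff {P : Type*} [AddCommGroup P] [Module Q P] {p : P} :
    (1 : Q ⧸ Ideal.span {f}) ⊗ₜ[Q] p = 0 ↔ ∃ p', f • p' = p := by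
  rw [← (quotTensorEquivQuotSMul P (Ideal.span {f})).map_eq_zero_iff,
    quotTensorEquivQuotSMul_mk_one_tmul, Submodule.Quotient.mk_eq_zero,
    Submodule.ideal_span_singleton_smul, Submodule.mem_smul_pointwise_iff_exists]
  simp only [Submodule.mem_top, true_and]

lemma baseChange_injective_of_isSMulRegular_s2 {A B C : Type*} [AddCommGroup A] [AddCommGroup B]
    [AddCommGroup C] [Module Q A] [Module Q B] [Module Q C] {i : A →ₗ[Q] B} {p : B →ₗ[Q] C}
    (hi : Function.Injective i) (hip : Function.Exact i p) (hC : IsSMulRegular C f) :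
    Function.Injective (i.baseChange (Q ⧸ Ideal.span {f})) := by
  refine (injective_iff_map_eq_zero _).2 fun x hx ↦ ?_
  obtain ⟨a, rfl⟩ := exists_one_tmul_eq _ x
  rw [LinearMap.baseChange_tmul, one_tmul_eq_zero_iff] at hx
  obtain ⟨b, hb⟩ := hx
  have hpb : p b = 0 := hC.right_eq_zero_of_smul <| by
    rw [← map_smul, hb, hip.apply_apply_eq_zero]
  obtain ⟨a', rfl⟩ := (hip b).1 hpb
  exact one_tmul_eq_zero_iff.2 ⟨a', hi (by rw [map_smul, hb])⟩

lemma injective_lTensor_baseChange {R : Type*} [CommRing R] [Algebra Q R] (M : Type*)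
    {A B : Type*} [AddCommGroup M] [AddCommGroup A] [AddCommGroup B] [Module Q M] [Module R M]
    [IsScalarTower Q R M] [Module Q A] [Module Q B] {i : A →ₗ[Q] B}
    (h : Function.Injective (i.lTensor M)) :
    Function.Injective ((i.baseChange R).lTensor M) := by
  let eA := AlgebraTensorModule.cancelBaseChange Q R R M A
  let eB := AlgebraTensorModule.cancelBaseChange Q R R M B
  have comm : eB ∘ (i.baseChange R).lTensor M = i.lTensor M ∘ eA :=
    congr_arg DFunLike.coe (show eB.toLinearMap ∘ₗ (i.baseChange R).lTensor M =
      AlgebraTensorModule.lTensor R M i ∘ₗ eA.toLinearMap by ext; simp [eA, eB])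
  exact .of_comp (comm ▸ h.comp eA.injective)

variable {F N : Type*} [AddCommGroup F] [Module Q F] [AddCommGroup N] [Module Q N]
  [Module (Q ⧸ Ideal.span {f}) N] [IsScalarTower Q (Q ⧸ Ideal.span {f}) N]

lemma smul_eq_zero_of_quotient (n : N) : f • n = 0 := by
  rw [← algebraMap_smul (Q ⧸ Ideal.span {f}), Ideal.Quotient.algebraMap_eq,
    Ideal.Quotient.mk_singleton_self, zero_smul]

variable (f) in
/-- Multiplication by `f`, as a map from `F` to the kernel of a map to a module killed by `f`. -/
noncomputable def smulKer (p : F →ₗ[Q] N) : F →ₗ[Q] p.ker :=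
  (LinearMap.lsmul Q F f).codRestrict p.ker fun x ↦ by
    rw [LinearMap.mem_ker, LinearMap.lsmul_apply, map_smul, smul_eq_zero_of_quotient]

variable {p : F →ₗ[Q] N}

variable (f) in
/-- The connecting map `N ≅ Tor₁^Q(Q/(f), N) → Q/(f) ⊗ ker p` of a presentation `p : F → N` of a
module killed by `f`, given by lifting to `F` and multiplying by `f`. -/
noncomputable def torConnecting (hp : Function.Surjective p) :
    N →ₗ[Q ⧸ Ideal.span {f}] (Q ⧸ Ideal.span {f}) ⊗[Q] p.ker :=
  LinearMap.extendScalarsOfSurjective Ideal.Quotient.mk_surjective <|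
    p.ker.liftQ (TensorProduct.mk Q (Q ⧸ Ideal.span {f}) _ 1 ∘ₗ smulKer f p)
      (fun k hk ↦ one_tmul_eq_zero_iff.2 ⟨⟨k, hk⟩, rfl⟩) ∘ₗ (p.quotKerEquivOfSurjective hp).symm

lemma torConnecting_apply (hp : Function.Surjective p) (x : F) :
    torConnecting f hp (p x) = 1 ⊗ₜ smulKer f p x := by
  simp only [torConnecting, LinearMap.extendScalarsOfSurjective_apply, LinearMap.comp_apply,
    LinearEquiv.coe_coe, LinearMap.quotKerEquivOfSurjective_symm_apply]
  rfl

lemma torConnecting_injective (hp : Function.Surjective p) (hF : IsSMulRegular F f) :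
    Function.Injective (torConnecting f hp) := by
  refine (injective_iff_map_eq_zero _).2 fun x hx ↦ ?_
  obtain ⟨x, rfl⟩ := hp x
  rw [torConnecting_apply, one_tmul_eq_zero_iff] at hx
  obtain ⟨k, hk⟩ := hx
  have : k.1 = x := hF (congr_arg Subtype.val hk)
  exact this ▸ k.2

lemma exact_torConnecting (hp : Function.Surjective p) :
    Function.Exact (torConnecting f hp) (p.ker.subtype.baseChange (Q ⧸ Ideal.span {f})) := by
  intro y
  obtain ⟨k, rfl⟩ := exists_one_tmul_eq _ y
  rw [LinearMap.baseChange_tmul, one_tmul_eq_zero_iff]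
  constructor
  · rintro ⟨x, hx⟩
    exact ⟨p x, by rw [torConnecting_apply, show smulKer f p x = k from Subtype.ext hx]⟩
  · rintro ⟨n, hn⟩
    obtain ⟨x, rfl⟩ := hp n
    rw [torConnecting_apply, ← sub_eq_zero, ← tmul_sub, one_tmul_eq_zero_iff] at hn
    obtain ⟨l, hl⟩ := hn
    refine ⟨x - l, ?_⟩
    rw [smul_sub, sub_eq_iff_eq_add, ← sub_eq_iff_eq_add']
    exact (congr_arg Subtype.val hl).symm

lemma exact_baseChange_liftBaseChange_s2 (p : F →ₗ[Q] N) :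
    Function.Exact (p.ker.subtype.baseChange (Q ⧸ Ideal.span {f}))
      (p.liftBaseChange (Q ⧸ Ideal.span {f})) := by
  intro y
  obtain ⟨x, rfl⟩ := exists_one_tmul_eq _ y
  rw [LinearMap.liftBaseChange_one_tmul]
  constructor
  · intro hx
    exact ⟨1 ⊗ₜ ⟨x, hx⟩, rfl⟩
  · rintro ⟨z, hz⟩
    obtain ⟨k, rfl⟩ := exists_one_tmul_eq _ z
    rw [← LinearMap.liftBaseChange_one_tmul (A := Q ⧸ Ideal.span {f}) p, ← hz,
      LinearMap.baseChange_tmul, LinearMap.liftBaseChange_one_tmul]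
    exact k.2

lemma liftBaseChange_surjective_s2 (hp : Function.Surjective p) :
    Function.Surjective (p.liftBaseChange (Q ⧸ Ideal.span {f})) := fun n ↦
  let ⟨x, hx⟩ := hp n
  ⟨1 ⊗ₜ x, by rw [LinearMap.liftBaseChange_one_tmul, hx]⟩

lemma lTensor_torConnecting_eq_zero {M : Type*} [AddCommGroup M] [Module Q M]
    [Module (Q ⧸ Ideal.span {f}) M] [IsScalarTower Q (Q ⧸ Ideal.span {f}) M]
    (hp : Function.Surjective p) (hM : Function.Injective (p.ker.subtype.lTensor M)) :
    (torConnecting f hp).lTensor M = 0 := by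
  have hinj := injective_lTensor_baseChange (R := Q ⧸ Ideal.span {f}) M hM
  refine LinearMap.ext fun x ↦ hinj ?_
  rw [← LinearMap.comp_apply, ← LinearMap.lTensor_comp,
    (exact_torConnecting hp).linearMap_comp_eq_zero, LinearMap.lTensor_zero, LinearMap.zero_apply,
    LinearMap.zero_apply, map_zero]

end BaseChange

section ChangeOfRings

open Limits TensorProduct

universe u

variable {Q : Type u} [CommRing Q] {f : Q}

lemma exists_surjective_of_isSMulRegular (hf : IsSMulRegular Q f) (K : Type u) [AddCommGroup K]
    [Module Q K] : ∃ (F : Type u) (_ : AddCommGroup F) (_ : Module Q F) (p : F →ₗ[Q] K),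
      Module.Projective Q F ∧ IsSMulRegular F f ∧ Function.Surjective p :=
  ⟨K →₀ Q, inferInstance, inferInstance, Finsupp.linearCombination Q id, inferInstance,
    hf.finsupp, Finsupp.linearCombination_id_surjective Q K⟩

variable {M F K : Type u} [AddCommGroup M] [Module (Q ⧸ Ideal.span {f}) M] [AddCommGroup F]
  [Module Q F] [AddCommGroup K] [Module Q K]

variable (M) in
lemma nonempty_tor_baseChange_iso_tor_baseChange_ker [Module.Projective Q F] {p : F →ₗ[Q] K}
    (hp : Function.Surjective p) (hK : IsSMulRegular K f) (n : ℕ) :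
    Nonempty (tor (Q ⧸ Ideal.span {f}) M ((Q ⧸ Ideal.span {f}) ⊗[Q] K) (n + 2) ≅
      tor (Q ⧸ Ideal.span {f}) M ((Q ⧸ Ideal.span {f}) ⊗[Q] p.ker) (n + 1)) := by
  have he := lTensor_exact (Q ⧸ Ideal.span {f}) p.exact_subtype_ker_map hp
  have hi := baseChange_injective_of_isSMulRegular_s2 (Submodule.injective_subtype _)
    p.exact_subtype_ker_map hK
  exact nonempty_tor_iso_tor_of_projective M (i := p.ker.subtype.baseChange (Q ⧸ Ideal.span {f}))
    (p := p.baseChange (Q ⧸ Ideal.span {f})) he hi (LinearMap.lTensor_surjective _ hp) n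

variable [Module Q M] [IsScalarTower Q (Q ⧸ Ideal.span {f}) M]

lemma isZero_tor_one_baseChange [Module.Projective Q F] {p : F →ₗ[Q] K}
    (hp : Function.Surjective p) (hK : IsSMulRegular K f) (h : IsZero (tor Q M K 1)) :
    IsZero (tor (Q ⧸ Ideal.span {f}) M ((Q ⧸ Ideal.span {f}) ⊗[Q] K) 1) := by
  have he := lTensor_exact (Q ⧸ Ideal.span {f}) p.exact_subtype_ker_map hp
  have hi := baseChange_injective_of_isSMulRegular_s2 (Submodule.injective_subtype _)
    p.exact_subtype_ker_map hK
  exact isZero_tor_one_of_injective_lTensor (i := p.ker.subtype.baseChange (Q ⧸ Ideal.span {f}))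
    (p := p.baseChange (Q ⧸ Ideal.span {f})) he hi (LinearMap.lTensor_surjective _ hp)
    (injective_lTensor_baseChange M (injective_lTensor_of_isZero_tor_one hp h))

lemma isZero_tor_baseChange (hf : IsSMulRegular Q f) (hK : IsSMulRegular K f) (n : ℕ)
    (h : IsZero (tor Q M K (n + 1))) :
    IsZero (tor (Q ⧸ Ideal.span {f}) M ((Q ⧸ Ideal.span {f}) ⊗[Q] K) (n + 1)) := by
  induction n generalizing K with
  | zero =>
    obtain ⟨F, _, _, p, _, -, hp⟩ := exists_surjective_of_isSMulRegular hf K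
    exact isZero_tor_one_baseChange hp hK h
  | succ n ih =>
    obtain ⟨F, _, _, p, _, hF, hp⟩ := exists_surjective_of_isSMulRegular hf K
    obtain ⟨e⟩ := nonempty_tor_iso_tor_ker M hp n
    obtain ⟨e'⟩ := nonempty_tor_baseChange_iso_tor_baseChange_ker M hp hK n
    exact (ih (hF.submodule _ _) (h.of_iso e.symm)).of_iso e'

lemma isZero_tor_baseChange_ker [Module.Projective Q F] (hf : IsSMulRegular Q f)
    (hF : IsSMulRegular F f) {p : F →ₗ[Q] K} (hp : Function.Surjective p) {n : ℕ}
    (h : IsZero (tor Q M K (n + 2))) :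
    IsZero (tor (Q ⧸ Ideal.span {f}) M ((Q ⧸ Ideal.span {f}) ⊗[Q] p.ker) (n + 1)) := by
  obtain ⟨e⟩ := nonempty_tor_iso_tor_ker M hp n
  exact isZero_tor_baseChange hf (hF.submodule _ _) n (h.of_iso e.symm)

theorem stmt2_general {Q : Type u} [CommRing Q] {f : Q} {M N : Type u} [AddCommGroup M]
    [AddCommGroup N] [Module Q M] [Module Q N] [Module (Q ⧸ Ideal.span {f}) M]
    [Module (Q ⧸ Ideal.span {f}) N] [IsScalarTower Q (Q ⧸ Ideal.span {f}) M]
    [IsScalarTower Q (Q ⧸ Ideal.span {f}) N] (hf : f ∈ nonZeroDivisors Q) (i : ℕ)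
    (h₁ : IsZero (tor Q M N (i + 1))) (h₂ : IsZero (tor Q M N (i + 2))) :
    Nonempty (tor (Q ⧸ Ideal.span {f}) M N i ≅ tor (Q ⧸ Ideal.span {f}) M N (i + 2)) := by
  have hf' : IsSMulRegular Q f := isSMulRegular_iff_right_eq_zero_of_smul.2 fun _ ↦
    (mul_left_mem_nonZeroDivisors_eq_zero_iff hf).1
  obtain ⟨F, _, _, p, _, hF, hp⟩ := exists_surjective_of_isSMulRegular hf' N
  obtain ⟨e⟩ := nonempty_tor_iso_tor_range_of_projective M
    (exact_baseChange_liftBaseChange_s2 (f := f) p) (liftBaseChange_surjective_s2 hp) i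
  suffices h : Nonempty (tor _ M (p.ker.subtype.baseChange (Q ⧸ Ideal.span {f})).range (i + 1) ≅
      tor (Q ⧸ Ideal.span {f}) M N i) from h.map fun e' ↦ (e ≪≫ e').symm
  have hσ := torConnecting_injective hp hF
  cases i with
  | zero =>
    exact nonempty_tor_one_range_iso_tor_zero (exact_torConnecting hp) hσ
      (isZero_tor_baseChange_ker hf' hF hp h₂)
      (lTensor_torConnecting_eq_zero hp (injective_lTensor_of_isZero_tor_one hp h₁))
  | succ j =>
    exact nonempty_tor_range_iso_tor_of_isZero (exact_torConnecting hp) hσ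
      (isZero_tor_baseChange_ker hf' hF hp h₁) (isZero_tor_baseChange_ker hf' hF hp h₂)

end ChangeOfRings

/-- Let `Q` be a Noetherian ring, `f` a nonzerodivisor on `Q`, `R = Q/(f)`, and
`M, N` finitely generated `R`-modules.  If `Tor_i^Q(M,N) = 0` for all `i ≥ n`, then
`Tor_i^R(M,N) ≅ Tor_{i+2}^R(M,N)` for all `i ≥ n − 1`. -/
theorem stmt2 (Q : Type) [CommRing Q] [IsNoetherianRing Q]
    (f : Q) (hf : f ∈ nonZeroDivisors Q)
    (M N : Type) [AddCommGroup M] [AddCommGroup N]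
    [Module Q M] [Module Q N]
    [Module (Q ⧸ Ideal.span {f}) M] [Module (Q ⧸ Ideal.span {f}) N]
    [IsScalarTower Q (Q ⧸ Ideal.span {f}) M] [IsScalarTower Q (Q ⧸ Ideal.span {f}) N]
    [Module.Finite (Q ⧸ Ideal.span {f}) M] [Module.Finite (Q ⧸ Ideal.span {f}) N]
    (n : ℕ) (hQ : ∀ i : ℕ, n ≤ i → Subsingleton (TorObj Q i M N)) :
    ∀ i : ℕ, n ≤ i + 1 →
      Nonempty (TorObj (Q ⧸ Ideal.span {f}) i M N ≅
        TorObj (Q ⧸ Ideal.span {f}) (i + 2) M N) := by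
  have h (j : ℕ) (hj : n ≤ j) := @ModuleCat.isZero_of_subsingleton _ _ _ (hQ j hj)
  exact fun i hi ↦ stmt2_general hf i (h _ hi) (h _ (by omega))
end

section
/- Let Q be a Noetherian ring, f a nonzerodivisor on Q, R = Q/(f), and M, N R-modules. If Tor_i^R(M,N) = 0 for n ≤ i ≤ n + c (with c ≥ 1), then Tor_i^Q(M,N) = 0 for n + 1 ≤ i ≤ n + c. -/
/-!
Lift a free resolution `F` of `N` over `R = Q/(f)` to free `Q`-modules `G n` with maps `g` lifting
the differentials. Then `g ∘ g = f • s` for some `s`, and `(x, y) ↦ (g x + f • y, -(s x + g y))`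
makes `G (n + 1) × G n` a `Q`-free resolution of `N`. Since `f` kills `M`, after tensoring with `M`
the term `f • y` vanishes, and the result is an extension of a shift of `M ⊗[Q] G = M ⊗[R] F` by
`M ⊗[Q] G` itself. Its long exact sequence is the change-of-rings sequence
`⋯ → Tor_k^R(M, N) → Tor_{k+1}^Q(M, N) → Tor_{k+1}^R(M, N) → ⋯`.
-/

open CategoryTheory

open TensorProduct

universe u

section Linear

variable {R : Type*} [Ring R]

theorem exists_comp_eq_of_exact {P A B C : Type*} [AddCommGroup P] [AddCommGroup A]
    [AddCommGroup B] [AddCommGroup C] [Module R P] [Module R A] [Module R B] [Module R C]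
    [Module.Projective R P] {i : A →ₗ[R] B} {p : B →ₗ[R] C} (hip : Function.Exact i p)
    {φ : P →ₗ[R] B} (hφ : p ∘ₗ φ = 0) : ∃ ψ : P →ₗ[R] A, i ∘ₗ ψ = φ := by
  have hrange : ∀ x, φ x ∈ LinearMap.range i := fun x => (hip _).1 (LinearMap.congr_fun hφ x)
  obtain ⟨ψ, hψ⟩ := Module.projective_lifting_property i.rangeRestrict (φ.codRestrict _ hrange)
    i.surjective_rangeRestrict
  exact ⟨ψ, LinearMap.ext fun x => congrArg Subtype.val (LinearMap.congr_fun hψ x)⟩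

variable {A₀ A₁ A₂ B₀ B₁ B₂ C₀ C₁ C₂ : Type*}
  [AddCommGroup A₀] [AddCommGroup A₁] [AddCommGroup A₂]
  [AddCommGroup B₀] [AddCommGroup B₁] [AddCommGroup B₂]
  [AddCommGroup C₀] [AddCommGroup C₁] [AddCommGroup C₂]
  [Module R A₀] [Module R A₁] [Module R A₂] [Module R B₀] [Module R B₁] [Module R B₂]
  [Module R C₀] [Module R C₁] [Module R C₂]

theorem exact_middle_row
    {a₂ : A₂ →ₗ[R] A₁} {a₁ : A₁ →ₗ[R] A₀} {b₂ : B₂ →ₗ[R] B₁} {b₁ : B₁ →ₗ[R] B₀}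
    {c₂ : C₂ →ₗ[R] C₁} {c₁ : C₁ →ₗ[R] C₀}
    {i₀ : A₀ →ₗ[R] B₀} {i₁ : A₁ →ₗ[R] B₁} {i₂ : A₂ →ₗ[R] B₂}
    {p₀ : B₀ →ₗ[R] C₀} {p₁ : B₁ →ₗ[R] C₁} {p₂ : B₂ →ₗ[R] C₂}
    (hi₂ : b₂ ∘ₗ i₂ = i₁ ∘ₗ a₂) (hi₁ : b₁ ∘ₗ i₁ = i₀ ∘ₗ a₁)
    (hp₂ : p₁ ∘ₗ b₂ = c₂ ∘ₗ p₂) (hp₁ : p₀ ∘ₗ b₁ = c₁ ∘ₗ p₁)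
    (hi₀ : Function.Injective i₀) (hip : Function.Exact i₁ p₁) (hp : Function.Surjective p₂)
    (ha : Function.Exact a₂ a₁) (hc : Function.Exact c₂ c₁) (hb : b₁ ∘ₗ b₂ = 0) :
    Function.Exact b₂ b₁ := by
  simp only [LinearMap.ext_iff, LinearMap.comp_apply, LinearMap.zero_apply] at hi₂ hi₁ hp₂ hp₁ hb
  refine fun y => ⟨fun hy => ?_, by rintro ⟨x, rfl⟩; exact hb x⟩
  obtain ⟨z, hz⟩ := (hc (p₁ y)).1 (by rw [← hp₁, hy, map_zero])
  obtain ⟨x, rfl⟩ := hp z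
  obtain ⟨a, ha'⟩ := (hip (y - b₂ x)).1 (by rw [map_sub, hp₂, hz, sub_self])
  have ha₁ : a₁ a = 0 := hi₀ <| by
    rw [← hi₁, ha', map_sub, hb, hy, sub_zero, map_zero]
  obtain ⟨a', rfl⟩ := (ha a).1 ha₁
  exact ⟨x + i₂ a', by rw [map_add, hi₂, ha', add_sub_cancel]⟩

theorem exact_neg_neg {a₂ : A₂ →ₗ[R] A₁} {a₁ : A₁ →ₗ[R] A₀} (h : Function.Exact a₂ a₁) :
    Function.Exact (-a₂) (-a₁) := by
  rw [LinearMap.exact_iff] at h ⊢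
  rw [LinearMap.ker_neg, LinearMap.range_neg, h]

theorem subsingleton_iff_surjective_of_exact {a : A₂ →ₗ[R] A₁} {b : A₁ →ₗ[R] A₀}
    (hab : Function.Exact a b) (hb : Function.Surjective b) :
    Subsingleton A₀ ↔ Function.Surjective a := by
  rw [← LinearMap.range_eq_top, ← hab.linearMap_ker_eq, LinearMap.ker_eq_top]
  refine ⟨fun _ => Subsingleton.elim _ _, ?_⟩
  rintro rfl
  exact subsingleton_of_forall_eq 0 fun c => (hb c).elim fun _ hx => hx.symm

end Linear

theorem exact_mapRange {R A B C : Type*} [Ring R] [AddCommGroup A] [AddCommGroup B]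
    [AddCommGroup C] [Module R A] [Module R B] [Module R C] {a : A →ₗ[R] B} {b : B →ₗ[R] C}
    (ha : Function.Injective a) (hab : Function.Exact a b) (ι : Type*) :
    Function.Exact (Finsupp.mapRange.linearMap a : (ι →₀ A) →ₗ[R] ι →₀ B)
      (Finsupp.mapRange.linearMap b) := by
  rw [LinearMap.exact_iff, Finsupp.ker_mapRange, hab.linearMap_ker_eq,
    Finsupp.range_mapRange_linearMap a (LinearMap.ker_eq_bot.2 ha)]

section Tensor

variable {Q : Type*} [CommRing Q] {f : Q} {M : Type*} [AddCommGroup M] [Module Q M]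

theorem lTensor_smul_eq_zero (hM : ∀ m : M, f • m = 0) {A B : Type*} [AddCommGroup A]
    [AddCommGroup B] [Module Q A] [Module Q B] (φ : A →ₗ[Q] B) : (f • φ).lTensor M = 0 :=
  TensorProduct.ext' fun m x => by
    rw [LinearMap.lTensor_tmul, LinearMap.smul_apply, ← TensorProduct.smul_tmul, hM,
      TensorProduct.zero_tmul, LinearMap.zero_apply]

theorem lTensor_bijective_of_exact_smul (hM : ∀ m : M, f • m = 0) {G F : Type*} [AddCommGroup G]
    [AddCommGroup F] [Module Q G] [Module Q F] {p : G →ₗ[Q] F} (hp : Function.Surjective p)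
    (hexact : Function.Exact (f • LinearMap.id : G →ₗ[Q] G) p) :
    Function.Bijective (p.lTensor M) := by
  refine ⟨(injective_iff_map_eq_zero _).2 fun t ht => ?_, LinearMap.lTensor_surjective M hp⟩
  obtain ⟨t', rfl⟩ := (lTensor_exact M hexact hp t).1 ht
  rw [lTensor_smul_eq_zero hM, LinearMap.zero_apply]

theorem exact_lTensor_restrictScalars_iff {R : Type*} [CommRing R] [Algebra Q R] [Module R M]
    [IsScalarTower Q R M] (hQR : Function.Surjective (algebraMap Q R)) {A B C : Type*}
    [AddCommGroup A] [AddCommGroup B] [AddCommGroup C] [Module Q A] [Module Q B] [Module Q C]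
    [Module R A] [Module R B] [Module R C] [IsScalarTower Q R A] [IsScalarTower Q R B]
    [IsScalarTower Q R C] {a : A →ₗ[R] B} {b : B →ₗ[R] C} :
    Function.Exact ((a.restrictScalars Q).lTensor M) ((b.restrictScalars Q).lTensor M) ↔
      Function.Exact (a.lTensor M) (b.lTensor M) := by
  have := TensorProduct.CompatibleSMul.of_algebraMap_surjective (M := M) (N := A) hQR
  have := TensorProduct.CompatibleSMul.of_algebraMap_surjective (M := M) (N := B) hQR
  have := TensorProduct.CompatibleSMul.of_algebraMap_surjective (M := M) (N := C) hQR
  exact (Function.Exact.iff_of_ladder_linearEquiv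
    (e₁ := (TensorProduct.equivOfCompatibleSMul Q R Q M A).symm)
    (e₂ := (TensorProduct.equivOfCompatibleSMul Q R Q M B).symm)
    (e₃ := (TensorProduct.equivOfCompatibleSMul Q R Q M C).symm)
    (g₁₂ := (a.lTensor M).restrictScalars Q) (g₂₃ := (b.lTensor M).restrictScalars Q)
    (TensorProduct.ext' fun _ _ => rfl) (TensorProduct.ext' fun _ _ => rfl)).symm

end Tensor

section Resolution

/-- The sequence `⋯ → X 1 → X 0 → N → 0` with differentials `d` and augmentation `ε` is exact. The
modules `X n` are unbundled, so that they can be products or free modules on the nose. -/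
structure IsResolution {A : Type*} [Ring A] {X : ℕ → Type*} [∀ n, AddCommGroup (X n)]
    [∀ n, Module A (X n)] {N : Type*} [AddCommGroup N] [Module A N]
    (d : ∀ n, X (n + 1) →ₗ[A] X n) (ε : X 0 →ₗ[A] N) : Prop where
  surjective : Function.Surjective ε
  exact_zero : Function.Exact (d 0) ε
  exact_succ (n : ℕ) : Function.Exact (d (n + 1)) (d n)

variable {A : Type u} [CommRing A] {X : ℕ → Type u} [∀ n, AddCommGroup (X n)] [∀ n, Module A (X n)]
  {N : Type u} [AddCommGroup N] [Module A N]

namespace IsResolution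

variable {d : ∀ n, X (n + 1) →ₗ[A] X n} {ε : X 0 →ₗ[A] N}

/-- The chain complex underlying a resolution, without its augmentation. -/
noncomputable def complex (h : IsResolution d ε) : ChainComplex (ModuleCat.{u} A) ℕ :=
  ChainComplex.of (fun n => ModuleCat.of A (X n)) (fun n => ModuleCat.ofHom (d n)) fun n =>
    ModuleCat.hom_ext (h.exact_succ n).linearMap_comp_eq_zero

theorem complex_d (h : IsResolution d ε) (n : ℕ) :
    h.complex.d (n + 1) n = ModuleCat.ofHom (d n) :=
  ChainComplex.of_d (fun n => ModuleCat.of A (X n)) (fun n => ModuleCat.ofHom (d n)) n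

theorem exactAt_succ (h : IsResolution d ε) (n : ℕ) : h.complex.ExactAt (n + 1) := by
  rw [HomologicalComplex.exactAt_iff' _ (n + 2) (n + 1) n (by simp) (by simp),
    ShortComplex.ShortExact.moduleCat_exact_iff_function_exact]
  simpa only [HomologicalComplex.shortComplexFunctor'_obj_f,
    HomologicalComplex.shortComplexFunctor'_obj_g, complex_d] using! h.exact_succ n

theorem complex_d_comp (h : IsResolution d ε) :
    h.complex.d 1 0 ≫ ModuleCat.ofHom ε = 0 := by
  rw [complex_d]
  exact ModuleCat.hom_ext h.exact_zero.linearMap_comp_eq_zero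

/-- A resolution by projective modules as a `ProjectiveResolution`, from which Mathlib computes left
derived functors. -/
noncomputable def projectiveResolution (h : IsResolution d ε) [∀ n, Module.Projective A (X n)] :
    ProjectiveResolution (ModuleCat.of A N) where
  complex := h.complex
  projective n := (IsProjective.iff_projective (X n)).1 inferInstance
  π := (ChainComplex.toSingle₀Equiv _ _).symm ⟨ModuleCat.ofHom ε, h.complex_d_comp⟩
  quasiIso := ⟨fun n => by
    cases n with
    | zero =>
      rw [ChainComplex.quasiIsoAt₀_iff, ShortComplex.quasiIso_iff_of_zeros' _ rfl rfl rfl]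
      constructor
      · rw [ShortComplex.ShortExact.moduleCat_exact_iff_function_exact]
        simpa [complex_d] using! h.exact_zero
      · exact (ModuleCat.epi_iff_surjective _).2 h.surjective
    | succ n =>
      rw [quasiIsoAt_iff_exactAt' (hL := ChainComplex.exactAt_succ_single_obj ..)]
      exact h.exactAt_succ n⟩

variable [∀ n, Module.Projective A (X n)] (M : Type u) [AddCommGroup M] [Module A M]

theorem subsingleton_tor_succ_iff (h : IsResolution d ε) (n : ℕ) :
    Subsingleton (((Tor (ModuleCat.{u} A) (n + 1)).obj (.of A M)).obj (.of A N)) ↔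
      Function.Exact ((d (n + 1)).lTensor M) ((d n).lTensor M) := by
  let T := (MonoidalCategory.tensoringLeft (ModuleCat.{u} A)).obj (.of A M)
  have hT : Subsingleton (((Tor (ModuleCat.{u} A) (n + 1)).obj (.of A M)).obj (.of A N)) ↔
      ((T.mapHomologicalComplex _).obj h.complex).ExactAt (n + 1) := by
    rw [HomologicalComplex.exactAt_iff_isZero_homology, ← ModuleCat.isZero_iff_subsingleton]
    exact (h.projectiveResolution.isoLeftDerivedObj T (n + 1)).isZero_iff
  rw [hT, HomologicalComplex.exactAt_iff' _ (n + 2) (n + 1) n (by simp) (by simp),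
    ShortComplex.ShortExact.moduleCat_exact_iff_function_exact]
  simp only [HomologicalComplex.shortComplexFunctor'_obj_f,
    HomologicalComplex.shortComplexFunctor'_obj_g, HomologicalComplex.sc',
    Functor.mapHomologicalComplex_obj_d, complex_d]
  rfl

end IsResolution

theorem subsingleton_tor_zero_iff (M : Type u) [AddCommGroup M] [Module A M] :
    Subsingleton (((Tor (ModuleCat.{u} A) 0).obj (.of A M)).obj (.of A N)) ↔
      Subsingleton (M ⊗[A] N) := by
  let T := (MonoidalCategory.tensoringLeft (ModuleCat.{u} A)).obj (.of A M)
  have e := T.leftDerivedZeroIsoSelf.app (.of A N)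
  rw [← ModuleCat.isZero_iff_subsingleton]
  exact e.isZero_iff.trans ModuleCat.isZero_iff_subsingleton

/- Indexing the resolution from `1`, with zero in degree `0`, makes degree `0` of Tor the homology
at an inner spot, like every other degree. -/
theorem IsResolution.subsingleton_tor_iff {X : ℕ → Type u} [∀ n, AddCommGroup (X n)]
    [∀ n, Module A (X n)] [∀ n, Module.Projective A (X n)] [Subsingleton (X 0)]
    {d : ∀ n, X (n + 1) →ₗ[A] X n} {ε : X 1 →ₗ[A] N} (M : Type u) [AddCommGroup M] [Module A M]
    (h : IsResolution (X := fun n => X (n + 1)) (fun n => d (n + 1)) ε) (n : ℕ) :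
    Subsingleton (((Tor (ModuleCat.{u} A) n).obj (.of A M)).obj (.of A N)) ↔
      Function.Exact ((d (n + 1)).lTensor M) ((d n).lTensor M) := by
  cases n with
  | succ n => exact h.subsingleton_tor_succ_iff M n
  | zero =>
    rw [subsingleton_tor_zero_iff, Subsingleton.elim (d 0) 0, LinearMap.lTensor_zero]
    change _ ↔ Function.Exact ((d 1).lTensor M) _
    exact (subsingleton_iff_surjective_of_exact (lTensor_exact M h.exact_zero h.surjective)
      (LinearMap.lTensor_surjective M h.surjective)).trans
      (LinearMap.exact_zero_iff_surjective _ _).symm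

end Resolution

/-- The syzygies of the free resolution that covers each module by the free module on its own
elements; the zeroth one is `N` itself. -/
noncomputable def freeSyzygy (R N : Type u) [Ring R] [AddCommGroup N] [Module R N] :
    ℕ → ModuleCat.{u} R
  | 0 => .of R N
  | n + 1 => .of R
      (LinearMap.ker (Finsupp.linearCombination R (id : freeSyzygy R N n → freeSyzygy R N n)))

theorem exists_isResolution_finsupp (R N : Type u) [Ring R] [AddCommGroup N] [Module R N] :
    ∃ (ι : ℕ → Type u) (d : ∀ n, (ι (n + 1) →₀ R) →ₗ[R] ι n →₀ R) (ε : (ι 0 →₀ R) →ₗ[R] N),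
      IsResolution (X := fun n => ι n →₀ R) d ε := by
  let e (n : ℕ) : (freeSyzygy R N n →₀ R) →ₗ[R] freeSyzygy R N n := Finsupp.linearCombination R id
  let i (n : ℕ) : freeSyzygy R N (n + 1) →ₗ[R] freeSyzygy R N n →₀ R :=
    (LinearMap.ker (e n)).subtype
  have he (n : ℕ) : Function.Surjective (e n) := Finsupp.linearCombination_id_surjective R _
  have hie (n : ℕ) : Function.Exact (i n ∘ₗ e (n + 1)) (e n) :=
    ((he (n + 1)).comp_exact_iff_exact).2 (LinearMap.exact_subtype_ker_map (e n))
  exact ⟨fun n => freeSyzygy R N n, fun n => i n ∘ₗ e (n + 1), e 0, he 0, hie 0, fun n =>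
    (Function.Injective.comp_exact_iff_exact (Submodule.subtype_injective _)).2 (hie (n + 1))⟩

theorem exists_isResolution_finsupp_shift (R N : Type u) [Ring R] [AddCommGroup N] [Module R N] :
    ∃ (ι : ℕ → Type u) (d : ∀ n, (ι (n + 1) →₀ R) →ₗ[R] ι n →₀ R) (ε : (ι 1 →₀ R) →ₗ[R] N),
      IsEmpty (ι 0) ∧ IsResolution (X := fun n => ι (n + 1) →₀ R) (fun n => d (n + 1)) ε := by
  obtain ⟨ι, d, ε, h⟩ := exists_isResolution_finsupp R N
  exact ⟨fun | 0 => PEmpty | n + 1 => ι n, fun | 0 => 0 | n + 1 => d n, ε, ⟨PEmpty.elim⟩, h⟩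

/-- A lift modulo `f` of a sequence of linear maps `d`: modules `G n` on which `f` is regular, with
`G n / f ≃ F n` encoded by the exactness of `G n → G n → F n → 0`, maps `map` lifting `d`, and maps
`htpy` witnessing that `map` squares to zero modulo `f`. -/
structure LiftModulo {Q : Type*} [CommRing Q] (f : Q) {F : ℕ → Type*} [∀ n, AddCommGroup (F n)]
    [∀ n, Module Q (F n)] (d : ∀ n, F (n + 1) →ₗ[Q] F n) (G : ℕ → Type*)
    [∀ n, AddCommGroup (G n)] [∀ n, Module Q (G n)] where
  proj (n : ℕ) : G n →ₗ[Q] F n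
  map (n : ℕ) : G (n + 1) →ₗ[Q] G n
  htpy (n : ℕ) : G (n + 2) →ₗ[Q] G n
  isSMulRegular (n : ℕ) : IsSMulRegular (G n) f
  proj_surjective (n : ℕ) : Function.Surjective (proj n)
  exact_smul_proj (n : ℕ) : Function.Exact (f • LinearMap.id : G n →ₗ[Q] G n) (proj n)
  proj_comp_map (n : ℕ) : proj n ∘ₗ map n = d n ∘ₗ proj (n + 1)
  smul_htpy (n : ℕ) : f • htpy n = map n ∘ₗ map (n + 1)

namespace LiftModulo

section

variable {Q : Type*} [CommRing Q] {f : Q} {F G : ℕ → Type*} [∀ n, AddCommGroup (F n)]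
  [∀ n, Module Q (F n)] [∀ n, AddCommGroup (G n)] [∀ n, Module Q (G n)]
  {d : ∀ n, F (n + 1) →ₗ[Q] F n}

theorem nonempty_of_projective [∀ n, Module.Projective Q (G n)] (hf : f ∈ nonZeroDivisors Q)
    (hd : ∀ n, d n ∘ₗ d (n + 1) = 0) (p : ∀ n, G n →ₗ[Q] F n)
    (hp : ∀ n, Function.Surjective (p n))
    (hexact : ∀ n, Function.Exact (f • LinearMap.id : G n →ₗ[Q] G n) (p n)) :
    Nonempty (LiftModulo f d G) := by
  choose g hg using fun n =>
    Module.projective_lifting_property (p n) (d n ∘ₗ p (n + 1)) (hp n)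
  have hgg (n : ℕ) : p n ∘ₗ g n ∘ₗ g (n + 1) = 0 := by
    rw [← LinearMap.comp_assoc, hg, LinearMap.comp_assoc, hg, ← LinearMap.comp_assoc, hd,
      LinearMap.zero_comp]
  choose s hs using fun n => exists_comp_eq_of_exact (hexact n) (hgg n)
  exact ⟨⟨p, g, s, fun _ => Module.Flat.isSMulRegular_of_nonZeroDivisors hf, hp, hexact, hg, hs⟩⟩

variable (L : LiftModulo f d G)

theorem proj_map (n : ℕ) (x : G (n + 1)) : L.proj n (L.map n x) = d n (L.proj (n + 1) x) :=
  LinearMap.congr_fun (L.proj_comp_map n) x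

theorem proj_smul (n : ℕ) (x : G n) : L.proj n (f • x) = 0 :=
  (L.exact_smul_proj n).apply_apply_eq_zero x

theorem smul_htpy_apply (n : ℕ) (x : G (n + 2)) :
    f • L.htpy n x = L.map n (L.map (n + 1) x) :=
  LinearMap.congr_fun (L.smul_htpy n) x

theorem htpy_map (n : ℕ) (x : G (n + 3)) :
    L.htpy n (L.map (n + 2) x) = L.map n (L.htpy (n + 1) x) :=
  L.isSMulRegular n <| by
    change f • _ = f • _
    rw [smul_htpy_apply, ← map_smul, smul_htpy_apply]

theorem exists_map_add_smul_eq (n : ℕ) {x : G n} {t : F (n + 1)} (ht : d n t = L.proj n x) :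
    ∃ a b, L.map n a + f • b = x := by
  obtain ⟨a, rfl⟩ := L.proj_surjective (n + 1) t
  obtain ⟨b, hb⟩ := (L.exact_smul_proj n (x - L.map n a)).1
    (by rw [map_sub, L.proj_map, ht, sub_self])
  exact ⟨a, b, eq_add_of_sub_eq' hb.symm |>.symm⟩

/-- The differential on `G (n + 1) × G n` of the resolution over `Q` built from a resolution `d`
over `Q/(f)`: the mapping cone of multiplication by `f` on `G`, corrected by `htpy` because `map`
squares to `f • htpy` instead of zero. -/
noncomputable def coneD (n : ℕ) : G (n + 2) × G (n + 1) →ₗ[Q] G (n + 1) × G n :=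
  ((L.map (n + 1)).coprod (f • LinearMap.id)).prod (-(L.htpy n).coprod (L.map n))

theorem coneD_apply (n : ℕ) (z : G (n + 2) × G (n + 1)) :
    L.coneD n z = (L.map (n + 1) z.1 + f • z.2, -(L.htpy n z.1 + L.map n z.2)) :=
  rfl

theorem coneD_comp_inr (n : ℕ) : L.coneD n ∘ₗ LinearMap.inr Q _ _ =
    f • LinearMap.inl Q _ _ - LinearMap.inr Q _ _ ∘ₗ L.map n :=
  LinearMap.ext fun y => Prod.ext (by simp [coneD_apply]) (by simp [coneD_apply])

theorem fst_comp_coneD (n : ℕ) : LinearMap.fst Q _ _ ∘ₗ L.coneD n =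
    L.map (n + 1) ∘ₗ LinearMap.fst Q _ _ + f • LinearMap.snd Q _ _ :=
  rfl

theorem coneD_comp_coneD (n : ℕ) : L.coneD n ∘ₗ L.coneD (n + 1) = 0 := by
  refine LinearMap.ext fun ⟨x, y⟩ => Prod.ext ?_ ?_
  · simp only [LinearMap.comp_apply, coneD_apply, map_add, map_smul, smul_neg, smul_add,
      smul_htpy_apply]
    exact add_neg_cancel _
  · simp only [LinearMap.comp_apply, coneD_apply, map_add, map_smul, map_neg, smul_htpy_apply,
      htpy_map]
    simp

theorem coneD_exact (hd : ∀ n, Function.Exact (d (n + 2)) (d (n + 1))) (n : ℕ) :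
    Function.Exact (L.coneD (n + 1)) (L.coneD n) := by
  refine fun ⟨x, y⟩ => ⟨fun hz => ?_, ?_⟩
  · have hxy : L.map (n + 1) x + f • y = 0 := congrArg Prod.fst hz
    obtain ⟨t, ht⟩ := (hd n (L.proj (n + 2) x)).1 <| by
      rw [← L.proj_map, eq_neg_of_add_eq_zero_left hxy, map_neg, L.proj_smul, neg_zero]
    obtain ⟨a, b, hab⟩ := L.exists_map_add_smul_eq (n + 2) ht
    refine ⟨(a, b), Prod.ext hab (L.isSMulRegular (n + 1) ?_)⟩
    change f • -(L.htpy (n + 1) a + L.map (n + 1) b) = f • y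
    rw [eq_neg_of_add_eq_zero_right hxy, ← hab, map_add, map_smul, smul_neg, smul_add,
      smul_htpy_apply]
  · rintro ⟨w, hw⟩
    rw [← hw]
    exact LinearMap.congr_fun (L.coneD_comp_coneD n) w

theorem isResolution_coneD [Subsingleton (G 0)] {N : Type*} [AddCommGroup N] [Module Q N]
    {ε : F 1 →ₗ[Q] N} (h : IsResolution (X := fun n => F (n + 1)) (fun n => d (n + 1)) ε) :
    IsResolution (X := fun n => G (n + 1) × G n) L.coneD
      (ε ∘ₗ L.proj 1 ∘ₗ LinearMap.fst Q (G 1) (G 0)) where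
  surjective := h.surjective.comp ((L.proj_surjective 1).comp Prod.fst_surjective)
  exact_zero := by
    refine fun ⟨x, y⟩ => ⟨fun hx => ?_, ?_⟩
    · obtain ⟨t, ht⟩ := (h.exact_zero (L.proj 1 x)).1 hx
      obtain ⟨a, b, hab⟩ := L.exists_map_add_smul_eq 1 ht
      exact ⟨(a, b), Prod.ext hab (Subsingleton.elim _ _)⟩
    · rintro ⟨⟨a, b⟩, hab⟩
      rw [← hab]
      change ε (L.proj 1 (L.map 1 a + f • b)) = 0
      rw [map_add, L.proj_smul, add_zero, L.proj_map]
      exact h.exact_zero.apply_apply_eq_zero _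
  exact_succ := L.coneD_exact h.exact_succ

variable (M : Type*) [AddCommGroup M] [Module Q M]

theorem exact_lTensor_map_iff (hM : ∀ m : M, f • m = 0) (n : ℕ) :
    Function.Exact ((L.map (n + 1)).lTensor M) ((L.map n).lTensor M) ↔
      Function.Exact ((d (n + 1)).lTensor M) ((d n).lTensor M) := by
  let e (k : ℕ) : M ⊗[Q] G k ≃ₗ[Q] M ⊗[Q] F k := LinearEquiv.ofBijective _
    (lTensor_bijective_of_exact_smul hM (L.proj_surjective k) (L.exact_smul_proj k))
  have he (k : ℕ) : (d k).lTensor M ∘ₗ e (k + 1) = e k ∘ₗ (L.map k).lTensor M :=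
    (LinearMap.lTensor_comp M _ _).symm.trans <|
      (congrArg _ (L.proj_comp_map k).symm).trans (LinearMap.lTensor_comp M _ _)
  exact (Function.Exact.iff_of_ladder_linearEquiv (he (n + 1)) (he n)).symm

theorem coneD_lTensor_exact (hM : ∀ m : M, f • m = 0) (n : ℕ)
    (h₀ : Function.Exact ((L.map (n + 1)).lTensor M) ((L.map n).lTensor M))
    (h₁ : Function.Exact ((L.map (n + 2)).lTensor M) ((L.map (n + 1)).lTensor M)) :
    Function.Exact ((L.coneD (n + 1)).lTensor M) ((L.coneD n).lTensor M) := by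
  have hi (k : ℕ) : (L.coneD k).lTensor M ∘ₗ (LinearMap.inr Q _ _).lTensor M =
      (LinearMap.inr Q _ _).lTensor M ∘ₗ (-(L.map k).lTensor M) := by
    rw [← LinearMap.lTensor_comp, L.coneD_comp_inr, LinearMap.lTensor_sub,
      lTensor_smul_eq_zero hM, zero_sub, LinearMap.lTensor_comp, LinearMap.comp_neg]
  have hp (k : ℕ) : (LinearMap.fst Q _ _).lTensor M ∘ₗ (L.coneD k).lTensor M =
      (L.map (k + 1)).lTensor M ∘ₗ (LinearMap.fst Q _ _).lTensor M := by
    rw [← LinearMap.lTensor_comp, L.fst_comp_coneD, LinearMap.lTensor_add,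
      lTensor_smul_eq_zero hM, add_zero, LinearMap.lTensor_comp]
  refine exact_middle_row (hi (n + 1)) (hi n) (hp (n + 1)) (hp n) ?_
    (lTensor_exact M Function.Exact.inr_fst LinearMap.fst_surjective)
    (LinearMap.lTensor_surjective M LinearMap.fst_surjective) (exact_neg_neg h₀) h₁ ?_
  · refine Function.LeftInverse.injective (g := (LinearMap.snd Q _ _).lTensor M) fun t => ?_
    rw [← LinearMap.lTensor_comp_apply, LinearMap.snd_comp_inr, LinearMap.lTensor_id_apply]
  · rw [← LinearMap.lTensor_comp, L.coneD_comp_coneD, LinearMap.lTensor_zero]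

end

theorem nonempty_finsupp {Q R : Type*} [CommRing Q] [CommRing R] [Algebra Q R] {f : Q}
    (hQR : Function.Surjective (algebraMap Q R)) (hf : f ∈ nonZeroDivisors Q)
    (hker : RingHom.ker (algebraMap Q R) = Ideal.span {f}) {ι : ℕ → Type*}
    {d : ∀ n, (ι (n + 1) →₀ R) →ₗ[Q] ι n →₀ R} (hd : ∀ n, d n ∘ₗ d (n + 1) = 0) :
    Nonempty (LiftModulo (F := fun n => ι n →₀ R) f d fun n => ι n →₀ Q) := by
  have hexact : Function.Exact (f • LinearMap.id : Q →ₗ[Q] Q) (Algebra.linearMap Q R) := fun x => by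
    rw [Algebra.linearMap_apply, ← RingHom.mem_ker, hker, Ideal.mem_span_singleton]
    exact exists_congr fun y => eq_comm
  have hinj : Function.Injective (f • LinearMap.id : Q →ₗ[Q] Q) :=
    Module.Flat.isSMulRegular_of_nonZeroDivisors hf
  exact nonempty_of_projective hf hd _
    (fun _ => Finsupp.mapRange_surjective _ (map_zero _) hQR) fun _ => exact_mapRange hinj hexact _

end LiftModulo

theorem stmt3_general {Q R : Type u} [CommRing Q] [CommRing R] [Algebra Q R]
    (hQR : Function.Surjective (algebraMap Q R)) {f : Q} (hf : f ∈ nonZeroDivisors Q)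
    (hker : RingHom.ker (algebraMap Q R) = Ideal.span {f})
    (M N : Type u) [AddCommGroup M] [AddCommGroup N] [Module Q M] [Module Q N]
    [Module R M] [Module R N] [IsScalarTower Q R M] [IsScalarTower Q R N] (k : ℕ)
    (h₀ : Subsingleton (((Tor (ModuleCat.{u} R) k).obj (.of R M)).obj (.of R N)))
    (h₁ : Subsingleton (((Tor (ModuleCat.{u} R) (k + 1)).obj (.of R M)).obj (.of R N))) :
    Subsingleton (((Tor (ModuleCat.{u} Q) (k + 1)).obj (.of Q M)).obj (.of Q N)) := by
  have hM (m : M) : f • m = 0 := by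
    have hfR : f ∈ RingHom.ker (algebraMap Q R) := hker ▸ Ideal.mem_span_singleton_self f
    rw [← algebraMap_smul R f m, RingHom.mem_ker.1 hfR, zero_smul]
  obtain ⟨ι, d, ε, hι, hd⟩ := exists_isResolution_finsupp_shift R N
  let dQ (n : ℕ) : (ι (n + 1) →₀ R) →ₗ[Q] ι n →₀ R := (d n).restrictScalars Q
  have hdQ : IsResolution (X := fun n => ι (n + 1) →₀ R) (fun n => dQ (n + 1))
      (ε.restrictScalars Q) := ⟨hd.surjective, hd.exact_zero, hd.exact_succ⟩
  obtain ⟨L⟩ := LiftModulo.nonempty_finsupp hQR hf hker (d := dQ) fun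
    | 0 => Subsingleton.elim _ _
    | n + 1 => (hdQ.exact_succ n).linearMap_comp_eq_zero
  have hL (n : ℕ) (hn : Subsingleton (((Tor (ModuleCat.{u} R) n).obj (.of R M)).obj (.of R N))) :
      Function.Exact ((L.map (n + 1)).lTensor M) ((L.map n).lTensor M) :=
    (L.exact_lTensor_map_iff M hM n).2 <| (exact_lTensor_restrictScalars_iff hQR).2 <|
      (hd.subsingleton_tor_iff (X := fun n => ι n →₀ R) M n).1 hn
  exact ((L.isResolution_coneD hdQ).subsingleton_tor_succ_iff M k).2
    (L.coneD_lTensor_exact M hM k (hL k h₀) (hL (k + 1) h₁))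

/-- Let `Q` be a Noetherian ring, `f` a nonzerodivisor on `Q`, `R = Q/(f)`, and
`M, N` finitely generated `R`-modules.  If `Tor_i^R(M,N) = 0` for `n ≤ i ≤ n + c`
(with `c ≥ 1`), then `Tor_i^Q(M,N) = 0` for `n + 1 ≤ i ≤ n + c`. -/
theorem stmt3 (Q : Type) [CommRing Q] [IsNoetherianRing Q]
    (f : Q) (hf : f ∈ nonZeroDivisors Q)
    (M N : Type) [AddCommGroup M] [AddCommGroup N]
    [Module Q M] [Module Q N]
    [Module (Q ⧸ Ideal.span {f}) M] [Module (Q ⧸ Ideal.span {f}) N]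
    [IsScalarTower Q (Q ⧸ Ideal.span {f}) M] [IsScalarTower Q (Q ⧸ Ideal.span {f}) N]
    [Module.Finite (Q ⧸ Ideal.span {f}) M] [Module.Finite (Q ⧸ Ideal.span {f}) N]
    (n c : ℕ) (hc : 1 ≤ c)
    (hR : ∀ i : ℕ, n ≤ i → i ≤ n + c → Subsingleton (TorObj (Q ⧸ Ideal.span {f}) i M N)) :
    ∀ i : ℕ, n + 1 ≤ i → i ≤ n + c → Subsingleton (TorObj Q i M N) := by
  rintro (_ | k) hnk hkc
  · omega
  · exact stmt3_general Ideal.Quotient.mk_surjective hf Ideal.mk_ker M N k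
      (hR k (by omega) (by omega)) (hR (k + 1) (by omega) hkc)
end
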